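/- Let $K$ be an algebraically closed field and let $\Gamma$ be a Brauer tree with multiplicity one: a finite tree with a cyclic ordering of the edges around each vertex. Let $Q$ be its Brauer quiver: its vertices are the edges of $\Gamma$, and for each vertex $c$ of $\Gamma$ and each edge $i$ at $c$ there is an arrow $i\to j$, where $j$ follows $i$ in the cyclic ordering at $c$ (a loop if $c$ is a leaf). The arrows belonging to $c$ form the $A$-cycle of $c$; each vertex of $Q$ lies on exactly two $A$-cycles. Let $A=KQ/I$ (paths composed from left to right), where $I$ is generated by the products of two consecutive arrows on different $A$-cycles and by the differences of the two full $A$-cycles starting at the same vertex. Let $K^b(A)$ be the bounded homotopy category of finitely generated projective left $A$-modules. A *diagram* is a path without self-intersections on $Q$, with more than one vertex, consisting of directed subpaths of $A$-cycles and changing its orientation and its $A$-cycle at each inner vertex where two such subpaths meet. These vertices and the two end points are the *marked* vertices; they are alternately sources and sinks. The complex of a diagram is $\bigoplus_i Ae_i\to\bigoplus_j Ae_j$ in degrees $0$ and $1$, where $i$ runs over the sources and $j$ over the sinks, with components given by multiplication by the directed subpaths. A *degree-one sink* is a sink that is an end point of the diagram. Let $T$ be a basic tilting complex over $A$ concentrated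 in degrees $0$ and $1$, and let $\Delta$ be the Brauer tree (with multiplicity one) of $\mathrm{End}_{K^b(A)}(T)$; its edges correspond to the indecomposable summands of $T$, and arrows $x\to y$ of its Brauer quiver correspond to morphisms from the summand $x$ to the summand $y$. Let $\Upsilon$ be an $A$-cycle of $A$, and let $z$ be a vertex of $\Delta$ corresponding to the sinks on $\Upsilon$, i.e. the edges of $\Delta$ incident to $z$ are exactly the summands of $T$ that are complexes of diagrams having a degree-one sink on $\Upsilon$ and no other vertex on $\Upsilon$, or stalk complexes in degree $1$ of modules $Ae_i$ with $i$ on $\Upsilon$. To such a summand associate the sequence of the marked vertices of its diagram, starting from its degree-one sink on $\Upsilon$, or the one-term sequence $(i)$ for the stalk complex of $Ae_i$. Fix a vertex $g$ of $\Upsilon$, and order the vertices of $\Upsilon$ linearly so that $g$ is the greatest and the vertices decrease along the arrows starting from $g$. Compare the sequences lexicographically: first vertices are compared by this order on $\Upsilon$; if the first $k\ge 1$ terms coincide, the $(k+1)$-st terms lie on the $A$-cycle through the common $k$-th term $v$ other than the one containing the previous terms ($\Upsilon$ for $k=1$), and they are compared by the linear order on it in which $v$ is the greatest and the vertices decrease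 along the arrows starting from $v$; an empty spot is least at an odd position and greatest at an even position. Then this is a (strict) linear order on the edges of $\Delta$ incident to $z$, and the cyclic ordering of these edges in $\Delta$ is the one glued from it: the edge that follows $x$ around $z$ is the greatest edge smaller than $x$, or the greatest edge of all if $x$ is the least one. -/

import Mathlib

open CategoryTheory CategoryTheory.Limits

universe u v w

noncomputable section

/-! ### Brauer trees -/

/-- A Brauer tree of multiplicity one on a vertex set `V`: a finite tree together with a cyclic
ordering of the edges around each vertex.  A dart `d` of the tree is the same thing as an edge
`d.edge` together with one of its two end points `d.fst`; the cyclic ordering at the vertex `c` is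
the restriction of the permutation `next` to the darts with `d.fst = c`. -/
structure BrauerTree (V : Type v) [Finite V] where
  /-- the underlying graph -/
  graph : SimpleGraph V
  isTree : graph.IsTree
  /-- the edge that follows `d.edge` in the cyclic ordering around the vertex `d.fst` -/
  next : Equiv.Perm graph.Dart
  fst_next : ∀ d, (next d).fst = d.fst
  /-- all the edges around a vertex form one single cycle -/
  sameCycle : ∀ d d', d.fst = d'.fst → next.SameCycle d d'

namespace BrauerTree

variable {V : Type v} [Finite V] (Γ : BrauerTree V)

/-- The edges of the Brauer tree, i.e. the vertices of its Brauer quiver. -/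
abbrev Edge : Type v := Γ.graph.edgeSet

/-- The half-edges of the Brauer tree.  A half-edge `d` stands for the vertex `d.edge` of the
Brauer quiver, seen as a member of the `A`-cycle attached to the vertex `d.fst` of the tree.
Every quiver vertex lies on exactly two `A`-cycles; `d.symm` is the same quiver vertex seen on the
other one. -/
abbrev Dart : Type v := Γ.graph.Dart

/-- The edge underlying a half-edge. -/
def toEdge (d : Γ.Dart) : Γ.Edge := ⟨d.edge, d.edge_mem⟩

instance : Fintype Γ.Edge := Fintype.ofFinite _

/-- The number of arrows of the `A`-cycle `d.fst` on the way from the half-edge `d` to the half-edge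
`d'` (a half-edge at the same vertex). -/
def dist (d d' : Γ.Dart) : ℕ := sInf {k : ℕ | (Γ.next)^[k] d = d'}

/-! ### The Brauer tree algebra -/

/-- Generators of the Brauer tree algebra: the trivial paths, indexed by the edges, and the arrows of
the Brauer quiver, indexed by the half-edges: `arrow d` is the arrow from `d.edge` to
`(Γ.next d).edge` on the `A`-cycle `d.fst`.  (At a leaf this arrow is a loop.) -/
inductive Gen : Type v
  | idem (i : Γ.Edge) : Gen
  | arrow (d : Γ.Dart) : Gen

section Algebra

variable (K : Type u) [Field K]

/-- A trivial path in the free algebra. -/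
abbrev freeIdem (i : Γ.Edge) : FreeAlgebra K Γ.Gen := FreeAlgebra.ι K (Gen.idem i)

/-- An arrow in the free algebra. -/
abbrev freeArrow (d : Γ.Dart) : FreeAlgebra K Γ.Gen := FreeAlgebra.ι K (Gen.arrow d)

/-- The product of the `k` consecutive arrows of the `A`-cycle `d.fst` that starts in `d.edge`. -/
def freePath (d : Γ.Dart) (k : ℕ) : FreeAlgebra K Γ.Gen :=
  ((List.range k).map fun j => Γ.freeArrow K ((Γ.next)^[j] d)).prod

/-- The defining relations of the Brauer tree algebra.  The first four families are those of the path
algebra of the Brauer quiver (a product `a * b` is the path `a` followed by the path `b`). -/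
inductive Rel : FreeAlgebra K Γ.Gen → FreeAlgebra K Γ.Gen → Prop
  | idem_mul_self (i : Γ.Edge) : Rel (Γ.freeIdem K i * Γ.freeIdem K i) (Γ.freeIdem K i)
  | idem_mul_idem (i j : Γ.Edge) (h : i ≠ j) : Rel (Γ.freeIdem K i * Γ.freeIdem K j) 0
  | sum_idem : Rel (∑ i : Γ.Edge, Γ.freeIdem K i) 1
  | idem_mul_arrow (d : Γ.Dart) :
      Rel (Γ.freeIdem K (Γ.toEdge d) * Γ.freeArrow K d) (Γ.freeArrow K d)
  | arrow_mul_idem (d : Γ.Dart) :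
      Rel (Γ.freeArrow K d * Γ.freeIdem K (Γ.toEdge (Γ.next d))) (Γ.freeArrow K d)
  /-- the product of two composable arrows on different `A`-cycles is zero -/
  | arrow_mul_arrow (d : Γ.Dart) :
      Rel (Γ.freeArrow K d * Γ.freeArrow K (Γ.next d).symm) 0
  /-- the two `A`-cycles through a quiver vertex, started in that vertex, are equal -/
  | cycle_eq (d : Γ.Dart) :
      Rel (Γ.freePath K d (Function.minimalPeriod Γ.next d))
        (Γ.freePath K d.symm (Function.minimalPeriod Γ.next d.symm))

/-- The basic Brauer tree algebra over `K` of the Brauer tree `Γ` with multiplicity one. -/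
def Alg : Type (max u v) := RingQuot (Γ.Rel K)

instance : Ring (Γ.Alg K) := RingQuot.instRing (Γ.Rel K)

instance : Algebra K (Γ.Alg K) := RingQuot.instAlgebra (Γ.Rel K)

/-- The quotient map from the free algebra on the trivial paths and the arrows. -/
def quot : FreeAlgebra K Γ.Gen →ₐ[K] Γ.Alg K := RingQuot.mkAlgHom K (Γ.Rel K)

/-- The idempotent `e_i` of the Brauer tree algebra. -/
def e (i : Γ.Edge) : Γ.Alg K := Γ.quot K (Γ.freeIdem K i)

/-- The path on the `A`-cycle `d.fst` from `d.edge` to `d'.edge`, for two different half-edges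
`d`, `d'` at the same vertex. -/
def path (d d' : Γ.Dart) : Γ.Alg K :=
  Γ.quot K (Γ.freePath K d (Γ.dist d d'))

/-! ### Projective modules and complexes -/

/-- The indecomposable projective left module `A e_i`. -/
abbrev Proj (i : Γ.Edge) : Ideal (Γ.Alg K) := Ideal.span {Γ.e K i}

/-- The homomorphism `A e_i → A e_j`, `x ↦ x * p * e_j`; for `p` in `e_i A e_j` this is the
multiplication by `p` on the right. -/
def mulMap (i j : Γ.Edge) (p : Γ.Alg K) : Γ.Proj K i →ₗ[Γ.Alg K] Γ.Proj K j :=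
  ((LinearMap.toSpanSingleton (Γ.Alg K) (Γ.Alg K) (p * Γ.e K j)).comp
    (Submodule.subtype (Γ.Proj K i))).codRestrict (Γ.Proj K j) (fun x => by
      have h : (x : Γ.Alg K) * p * Γ.e K j ∈ Γ.Proj K j :=
        Ideal.mul_mem_left _ _ (Ideal.subset_span rfl)
      simpa [LinearMap.toSpanSingleton_apply, mul_assoc] using h)

/-- Cochain complexes of left modules over the Brauer tree algebra. -/
abbrev Cplx := CochainComplex (ModuleCat.{max u v} (Γ.Alg K)) ℤ

/-- The homotopy category of complexes of left modules over the Brauer tree algebra. -/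
abbrev HoCat := HomotopyCategory (ModuleCat.{max u v} (Γ.Alg K)) (ComplexShape.up ℤ)

/-- A complex, seen as an object of the homotopy category. -/
abbrev toHo (C : Γ.Cplx K) : Γ.HoCat K := (HomotopyCategory.quotient _ _).obj C

variable {Γ K}

/-- `C` is a bounded complex of finitely generated projective modules. -/
def IsPerfect (C : Γ.Cplx K) : Prop :=
  (∀ k, Module.Finite (Γ.Alg K) (C.X k) ∧ Module.Projective (Γ.Alg K) (C.X k)) ∧
    ∃ a b : ℤ, ∀ k, (k < a ∨ b < k) → IsZero (C.X k)

/-- `C` is concentrated in the degrees `0` and `1`. -/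
def IsTwoTerm (C : Γ.Cplx K) : Prop := ∀ k : ℤ, k ≠ 0 → k ≠ 1 → IsZero (C.X k)

/-- `T` is a tilting complex: it is perfect, it has no non-zero maps to its non-trivial shifts (for
perfect complexes, homomorphisms in the derived category are homotopy classes of chain maps), and
every full triangulated subcategory closed under direct summands that contains `T` contains all
perfect complexes. -/
def IsTilting (T : Γ.Cplx K) : Prop :=
  IsPerfect T ∧
  (∀ k : ℤ, k ≠ 0 → ∀ f : Γ.toHo K T ⟶ (Γ.toHo K T)⟦k⟧, f = 0) ∧
  ∀ P : ObjectProperty (Γ.HoCat K), P.IsTriangulated → P.IsStableUnderRetracts →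
    P (Γ.toHo K T) → ∀ C : Γ.Cplx K, IsPerfect C → P (Γ.toHo K C)

/-- `T` is basic: it has no repeated non-zero direct summand in the homotopy category. -/
def IsBasic (T : Γ.Cplx K) : Prop :=
  ∀ X : Γ.HoCat K, Nonempty (Retract (X ⊞ X) (Γ.toHo K T)) → IsZero X

variable (K) in
/-- The stalk complex of the projective module `A e_i`, concentrated in degree `k`. -/
def stalk (k : ℤ) (i : Γ.Edge) : Γ.Cplx K :=
  (HomologicalComplex.single _ (ComplexShape.up ℤ) k).obj (ModuleCat.of _ (Γ.Proj K i))

end Algebra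

/-! ### Diagrams -/

/-- A diagram of a minimal projective presentation, together with a direction in which it is
traversed: a path without self-intersections on the Brauer quiver which changes its `A`-cycle and
its orientation in each of its marked vertices.  Such a path is given by the sequence
`c₀, i₁, c₁, i₂, c₂, …, i_m, c_m` of its marked vertices `i₁, …, i_m` (`m ≥ 2`, edges of the tree),
and of the `A`-cycles `c₁, …, c_{m-1}` (vertices of the tree) that carry the directed subpaths between
consecutive marked vertices, `c₀` and `c_m` being the second `A`-cycles through the end points `i₁`,
`i_m`; that is, by a path of length at least two in the tree.  The marked vertices are alternately
sinks and sources. -/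
structure Diagram where
  /-- the second `A`-cycle through the first marked vertex -/
  first : V
  /-- the second `A`-cycle through the last marked vertex -/
  last : V
  /-- the path in the tree whose edges are the marked vertices -/
  walk : Γ.graph.Walk first last
  isPath : walk.IsPath
  two_le : 2 ≤ walk.length
  /-- whether the first marked vertex is a sink -/
  sinkFirst : Prop

namespace Diagram

variable {Γ} (D : Γ.Diagram)

/-- The `k`-th marked vertex (counted from `0`), seen on the `A`-cycle on which the
diagram arrives at it. -/
def dart (k : Fin D.walk.darts.length) : Γ.Dart := D.walk.darts.get k

/-- The `k`-th marked vertex is a sink. -/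
def IsSink (k : Fin D.walk.darts.length) : Prop := Even (k : ℕ) ↔ D.sinkFirst

/-- `D.Piece a b`: the half-edges `a` and `b` at a common vertex `c` are a source and a sink that are
consecutive marked vertices of the diagram; they are joined by the directed subpath from `a`
to `b` on the `A`-cycle `c`. -/
def Piece (a b : Γ.Dart) : Prop :=
  ∃ k l : Fin D.walk.darts.length, ¬ D.IsSink k ∧ D.IsSink l ∧
    (((l : ℕ) = k + 1 ∧ a = (D.dart k).symm ∧ b = D.dart l) ∨
     ((k : ℕ) = l + 1 ∧ a = D.dart k ∧ b = (D.dart l).symm))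

/-- The quiver vertex `i` lies on the diagram: it is on one of the directed subpaths of the
diagram (end points included). -/
def OnDiagram (i : Γ.Edge) : Prop :=
  ∃ a b, D.Piece a b ∧ ∃ j ≤ Γ.dist a b, i = Γ.toEdge ((Γ.next)^[j] a)

variable (K : Type u) [Field K]

open scoped Classical in
/-- The component `A e_i → A e_j` of the differential between the `k`-th marked vertex `i` (a source)
and the `l`-th marked vertex `j` (a sink) is the multiplication by this element: by the
directed subpath from `i` to `j` if the two marked vertices are consecutive, by zero otherwise. -/
def coeff (k l : Fin D.walk.darts.length) : Γ.Alg K :=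
  if (l : ℕ) = k + 1 then Γ.path K (D.dart k).symm (D.dart l)
  else if (k : ℕ) = l + 1 then Γ.path K (D.dart k) (D.dart l).symm
  else 0

/-- The differential from the sum of the `A e_i` over all sources `i` to the sum of the `A e_j` over
all sinks `j`. -/
def differential :
    ((k : {k // ¬ D.IsSink k}) → Γ.Proj K (Γ.toEdge (D.dart k))) →ₗ[Γ.Alg K]
      ((l : {l // D.IsSink l}) → Γ.Proj K (Γ.toEdge (D.dart l))) :=
  letI : Fintype {k // ¬ D.IsSink k} := Fintype.ofFinite _
  LinearMap.pi fun l => ∑ k : {k // ¬ D.IsSink k},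
    (Γ.mulMap K (Γ.toEdge (D.dart k)) (Γ.toEdge (D.dart l)) (D.coeff K k l)).comp
      (LinearMap.proj k)

/-- The two-term complex with the given diagram: sources in degree `0`, sinks in degree `1`. -/
def complex : Γ.Cplx K :=
  HomologicalComplex.double (ModuleCat.ofHom (D.differential K))
    (show (ComplexShape.up ℤ).Rel 0 1 from rfl)

end Diagram

/-! ### Cyclic lexicographic order -/

/-- The complex `S` belongs to the sinks on the `A`-cycle `c`, and `L` is the ordered set of its marked
vertices: either `S` is the stalk complex in degree `1` of a projective module whose vertex lies on
`c`, and `L` consists of this vertex, or `S` has a diagram with a degree-one sink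
on `c` and no other vertex on `c`, and `L` lists the marked vertices starting from this sink.  (A
diagram may be traversed in both directions, so it is enough to look at the first marked vertex.)
Each marked vertex is recorded as a half-edge, on the `A`-cycle on which the diagram arrives
at it, which is `c` for the first one. -/
inductive IsSinkList {K : Type u} [Field K] (c : V) : Γ.Cplx K → List Γ.Dart → Prop
  | stalk (d : Γ.Dart) (h : d.fst = c) : IsSinkList c (stalk K 1 (Γ.toEdge d)) [d]
  | diagram (D : Γ.Diagram) (k : Fin D.walk.darts.length) (hk : (k : ℕ) = 0)
      (sink : D.IsSink k) (mem : c ∈ (D.dart k).edge)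
      (only : ∀ i : Γ.Edge, D.OnDiagram i → c ∈ i.1 → i = Γ.toEdge (D.dart k)) :
      IsSinkList c (D.complex K) D.walk.darts

/-- The linear order on the vertices of an `A`-cycle in which the vertex `g` is the greatest, the one
reached from `g` by an arrow is the next smaller one, and so on. -/
def CycleLt (g a b : Γ.Dart) : Prop := Γ.dist g b < Γ.dist g a

/-- Comparison of the ordered sets of marked vertices, from position `p` on, where `g` is set to be
the greatest vertex of the `A`-cycle containing the vertices at position `p`.  If these vertices
coincide, one goes on with position `p + 1`, where the common vertex is the greatest one on the
other `A`-cycle through it.  An empty spot is least at an odd, and greatest at an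
even position. -/
def LexLt : ℕ → Γ.Dart → List Γ.Dart → List Γ.Dart → Prop
  | _, _, [], [] => False
  | p, _, [], _ :: _ => Odd p
  | p, _, _ :: _, [] => Even p
  | p, g, a :: as, b :: bs => (a = b ∧ LexLt (p + 1) a.symm as bs) ∨ (a ≠ b ∧ Γ.CycleLt g a b)

end BrauerTree

/-- `b` follows `a` in the cyclic ordering glued from the linear order `lt`, where the cyclic
ordering runs from greater to smaller elements (as the arrows of an `A`-cycle do): `b` is the immediate
predecessor of `a`, or `a` is the least and `b` is the greatest element. -/
def GluedNext {α : Type w} (lt : α → α → Prop) (a b : α) : Prop :=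
  (lt b a ∧ ∀ x, ¬ (lt b x ∧ lt x a)) ∨ ((∀ x, ¬ lt x a) ∧ ∀ x, ¬ lt b x)

/-! ### The Brauer tree of the endomorphism algebra -/

namespace BrauerTree

variable {V : Type v} [Finite V] {Γ : BrauerTree V} {K : Type u} [Field K]

/-- An isomorphism of the Brauer tree algebra of `Δ` with the endomorphism algebra of `T`
in the homotopy category.  Products in `Δ.Alg K` are read from left to right and products in
`End` from right to left, so `ᵐᵒᵖ` makes an arrow from `x` to `y` correspond to a morphism from the
summand `x` to the summand `y`. -/
abbrev EndIso {W : Type w} [Finite W] (Δ : BrauerTree W) (T : Γ.Cplx K) :=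
  Δ.Alg K ≃ₐ[K] (End (Γ.toHo K T))ᵐᵒᵖ

/-- The complex `S` is the summand of `T` that corresponds to the edge `x` of the Brauer tree of the
endomorphism algebra of `T`: it is the image of the idempotent endomorphism given by `e_x`. -/
def IsSummandAt {W : Type w} [Finite W] {Δ : BrauerTree W} {T : Γ.Cplx K} (φ : EndIso Δ T)
    (x : Δ.Edge) (S : Γ.Cplx K) : Prop :=
  ∃ (i : Γ.toHo K S ⟶ Γ.toHo K T) (p : Γ.toHo K T ⟶ Γ.toHo K S),
    i ≫ p = 𝟙 _ ∧ p ≫ i = (φ (Δ.e K x)).unop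

/-- `L` is the ordered set of marked vertices of the summand of `T` at the edge `x`, and this summand
belongs to the sinks on the `A`-cycle `c`. -/
def IsSinkListAt {W : Type w} [Finite W] {Δ : BrauerTree W} {T : Γ.Cplx K} (φ : EndIso Δ T)
    (c : V) (x : Δ.Edge) (L : List Γ.Dart) : Prop :=
  ∃ S : Γ.Cplx K, IsSummandAt φ x S ∧ Γ.IsSinkList c S L

/-- The vertex `z` of the Brauer tree of the endomorphism algebra of `T` corresponds to the sinks on
the `A`-cycle `c`: the edges incident to `z` are exactly the summands of `T` that belong to the sinks
on `c`. -/
def IsSinkVertex {W : Type w} [Finite W] {Δ : BrauerTree W} {T : Γ.Cplx K} (φ : EndIso Δ T)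
    (c : V) (z : W) : Prop :=
  ∀ x : Δ.Edge, z ∈ x.1 ↔ ∃ L, IsSinkListAt φ c x L

end BrauerTree

end

namespace BrauerTree

section Cycles

variable {V : Type v} [Finite V] {Γ : BrauerTree V}

/-- The number of half-edges at the vertex `d.fst`, i.e. the length of its `A`-cycle. -/
noncomputable abbrev period (Γ : BrauerTree V) (d : Γ.Dart) : ℕ := Function.minimalPeriod Γ.next d

instance : Finite Γ.Dart := Finite.of_injective _ SimpleGraph.Dart.toProd_injective

lemma mem_periodicPts (d : Γ.Dart) : d ∈ Function.periodicPts Γ.next :=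
  Γ.next.injective.mem_periodicPts d

lemma period_pos (d : Γ.Dart) : 0 < Γ.period d :=
  Function.minimalPeriod_pos_of_mem_periodicPts (mem_periodicPts d)

lemma iterate_period (d : Γ.Dart) : (Γ.next)^[Γ.period d] d = d := Function.iterate_minimalPeriod

lemma fst_iterate (k : ℕ) (d : Γ.Dart) : ((Γ.next)^[k] d).fst = d.fst := by
  induction k with
  | zero => rfl
  | succ k ih => rw [Function.iterate_succ_apply', Γ.fst_next, ih]

lemma exists_iterate {d d' : Γ.Dart} (h : d.fst = d'.fst) :
    ∃ k < Γ.period d, (Γ.next)^[k] d = d' := by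
  obtain ⟨k, hk⟩ := (Γ.sameCycle d d' h).exists_nat_pow_eq
  refine ⟨k % Γ.period d, Nat.mod_lt _ (period_pos d), ?_⟩
  rw [Function.iterate_mod_minimalPeriod_eq, ← hk, Equiv.Perm.coe_pow]

lemma dist_eq {d d' : Γ.Dart} {k : ℕ} (hk : k < Γ.period d) (h : (Γ.next)^[k] d = d') :
    Γ.dist d d' = k := by
  have hmem : k ∈ {k : ℕ | (Γ.next)^[k] d = d'} := h
  have h1 : Γ.dist d d' ≤ k := Nat.sInf_le hmem
  have h2 : (Γ.next)^[Γ.dist d d'] d = d' := Nat.sInf_mem ⟨k, hmem⟩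
  exact (Function.iterate_eq_iterate_iff_of_lt_minimalPeriod (h1.trans_lt hk) hk).1 (h2.trans h.symm)

lemma iterate_dist {d d' : Γ.Dart} (h : d.fst = d'.fst) : (Γ.next)^[Γ.dist d d'] d = d' := by
  obtain ⟨k, hk, hk'⟩ := exists_iterate h
  rw [dist_eq hk hk', hk']

lemma dist_lt {d d' : Γ.Dart} (h : d.fst = d'.fst) : Γ.dist d d' < Γ.period d := by
  obtain ⟨k, hk, hk'⟩ := exists_iterate h
  rwa [dist_eq hk hk']

lemma period_eq {d d' : Γ.Dart} (h : d.fst = d'.fst) : Γ.period d = Γ.period d' := by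
  rw [period, period, ← iterate_dist h, Function.minimalPeriod_apply_iterate (mem_periodicPts d)]

lemma dist_pos {d d' : Γ.Dart} (h : d.fst = d'.fst) (hne : d ≠ d') : 0 < Γ.dist d d' := by
  rw [Nat.pos_iff_ne_zero]
  intro h0
  have := iterate_dist h
  rw [h0] at this
  exact hne this

lemma dist_injective {g a b : Γ.Dart} (ha : g.fst = a.fst) (hb : g.fst = b.fst)
    (h : Γ.dist g a = Γ.dist g b) : a = b := by
  rw [← iterate_dist ha, h, iterate_dist hb]

lemma dist_add_dist {g a b : Γ.Dart} (ha : g.fst = a.fst) (hb : g.fst = b.fst)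
    (h : Γ.dist g a ≤ Γ.dist g b) : Γ.dist g a + Γ.dist a b = Γ.dist g b := by
  have hlt := dist_lt hb
  rw [period_eq ha] at hlt
  have : Γ.dist a b = Γ.dist g b - Γ.dist g a := by
    refine dist_eq (by omega) ?_
    have e := iterate_dist hb
    rwa [← Nat.sub_add_cancel h, Function.iterate_add_apply, iterate_dist ha] at e
  omega

lemma dist_add_dist_symm {g a : Γ.Dart} (ha : g.fst = a.fst) (hne : g ≠ a) :
    Γ.dist g a + Γ.dist a g = Γ.period g := by
  have hlt := dist_lt ha
  have hpos := dist_pos ha hne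
  have : Γ.dist a g = Γ.period g - Γ.dist g a := by
    refine dist_eq (by rw [← period_eq ha]; omega) ?_
    have e := iterate_period g
    rwa [← Nat.sub_add_cancel hlt.le, Function.iterate_add_apply, iterate_dist ha] at e
  omega

lemma dist_add_dist_back {g a b : Γ.Dart} (ha : g.fst = a.fst) (hb : g.fst = b.fst)
    (hga : g ≠ a) (h : Γ.dist g a < Γ.dist g b) : Γ.dist a b + Γ.dist b g = Γ.dist a g := by
  have hgb : g ≠ b := by
    rintro rfl
    rw [dist_eq (d' := g) (period_pos g) rfl] at h
    omega
  have h1 := dist_add_dist ha hb h.le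
  have h2 := dist_add_dist_symm ha hga
  have h3 := dist_add_dist_symm hb hgb
  omega

lemma toEdge_symm (d : Γ.Dart) : Γ.toEdge d.symm = Γ.toEdge d :=
  Subtype.ext (SimpleGraph.Dart.edge_symm d)

lemma toEdge_eq_iff {d d' : Γ.Dart} : Γ.toEdge d = Γ.toEdge d' ↔ d = d' ∨ d = d'.symm := by
  rw [← SimpleGraph.dart_edge_eq_iff, toEdge, toEdge, Subtype.mk.injEq]

lemma fst_symm_ne (d : Γ.Dart) : d.symm.fst ≠ d.fst := d.snd_ne_fst

lemma eq_of_toEdge_eq {d d' : Γ.Dart} (h : Γ.toEdge d = Γ.toEdge d') (hf : d.fst = d'.fst) :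
    d = d' := by
  rcases toEdge_eq_iff.1 h with h | rfl
  · exact h
  · exact absurd hf (fst_symm_ne d')

/-- If two different edges meet in `a.fst`, they meet nowhere else. -/
lemma fst_eq_of_toEdge_eq {a b d d' : Γ.Dart} (hab : a.fst = b.fst) (hne : a ≠ b)
    (ha : Γ.toEdge d = Γ.toEdge a) (hb : Γ.toEdge d' = Γ.toEdge b) (hd : d.fst = d'.fst) :
    d = a ∧ d' = b := by
  rcases toEdge_eq_iff.1 ha with rfl | rfl <;> rcases toEdge_eq_iff.1 hb with rfl | rfl
  · exact ⟨rfl, rfl⟩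
  · exact absurd (hd.symm.trans hab) (fst_symm_ne _)
  · exact absurd (hd.trans hab.symm) (fst_symm_ne _)
  · refine absurd (SimpleGraph.Dart.ext _ _ (Prod.ext hab ?_)) hne
    exact hd

end Cycles

/-! ### The lexicographic order is linear -/

section Lex

variable {V : Type v} [Finite V] {Γ : BrauerTree V}

/-- The list of darts is the continuation of a path in the tree that arrives in the vertex `g.fst`
through the edge `g.symm`. -/
def IsRoute : Γ.Dart → List Γ.Dart → Prop
  | _, [] => True
  | g, d :: L => g.fst = d.fst ∧ g ≠ d ∧ IsRoute d.symm L

/-- The list is nonempty and consists of the darts of a path in the tree that starts in `c`. -/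
def IsRouteFrom (c : V) : List Γ.Dart → Prop
  | [] => False
  | d :: L => d.fst = c ∧ IsRoute d.symm L

lemma lexLt_irrefl (p : ℕ) (g : Γ.Dart) (L : List Γ.Dart) : ¬ Γ.LexLt p g L L := by
  induction L generalizing p g with
  | nil => simp [LexLt]
  | cons a as ih => simp [LexLt, ih]

lemma lexLt_trans_cons {p : ℕ} {g a b d : Γ.Dart} {as bs ds : List Γ.Dart}
    (ih : Γ.LexLt (p + 1) a.symm as bs → Γ.LexLt (p + 1) a.symm bs ds →
      Γ.LexLt (p + 1) a.symm as ds)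
    (h₁ : Γ.LexLt p g (a :: as) (b :: bs)) (h₂ : Γ.LexLt p g (b :: bs) (d :: ds)) :
    Γ.LexLt p g (a :: as) (d :: ds) := by
  simp only [LexLt, CycleLt] at h₁ h₂ ⊢
  rcases h₁ with ⟨rfl, h₁⟩ | ⟨h₁, h₁'⟩
  · rcases h₂ with ⟨rfl, h₂⟩ | ⟨h₂, h₂'⟩
    · exact .inl ⟨rfl, ih h₁ h₂⟩
    · exact .inr ⟨h₂, h₂'⟩
  · rcases h₂ with ⟨rfl, h₂⟩ | ⟨h₂, h₂'⟩
    · exact .inr ⟨h₁, h₁'⟩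
    · refine .inr ⟨?_, by omega⟩
      rintro rfl
      omega

lemma lexLt_trans {p : ℕ} {g : Γ.Dart} {L₁ L₂ L₃ : List Γ.Dart}
    (h₁ : Γ.LexLt p g L₁ L₂) (h₂ : Γ.LexLt p g L₂ L₃) : Γ.LexLt p g L₁ L₃ := by
  induction L₁ generalizing p g L₂ L₃ with
  | nil =>
    rcases L₂ with _ | ⟨b, bs⟩
    · exact h₂
    · rcases L₃ with _ | ⟨d, ds⟩
      · simp only [LexLt] at h₁ h₂
        exact absurd h₂ (Nat.not_even_iff_odd.2 h₁)
      · exact h₁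
  | cons a as ih =>
    rcases L₂ with _ | ⟨b, bs⟩
    · rcases L₃ with _ | ⟨d, ds⟩
      · exact h₁
      · simp only [LexLt] at h₁ h₂
        exact absurd h₁ (Nat.not_even_iff_odd.2 h₂)
    · rcases L₃ with _ | ⟨d, ds⟩
      · exact h₂
      · exact lexLt_trans_cons ih h₁ h₂

lemma lexLt_trichotomy {p : ℕ} {g : Γ.Dart} {L₁ L₂ : List Γ.Dart}
    (h₁ : IsRoute g L₁) (h₂ : IsRoute g L₂) :
    Γ.LexLt p g L₁ L₂ ∨ L₁ = L₂ ∨ Γ.LexLt p g L₂ L₁ := by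
  induction L₁ generalizing p g L₂ with
  | nil =>
    rcases L₂ with _ | ⟨b, bs⟩
    · exact .inr (.inl rfl)
    · simp only [LexLt, reduceCtorEq, false_or]
      exact (Nat.even_or_odd p).symm
  | cons a as ih =>
    rcases L₂ with _ | ⟨b, bs⟩
    · simp only [LexLt, reduceCtorEq, false_or]
      exact Nat.even_or_odd p
    · by_cases hab : a = b
      · subst hab
        rcases ih (p := p + 1) h₁.2.2 h₂.2.2 with h | rfl | h
        · exact .inl (.inl ⟨rfl, h⟩)
        · exact .inr (.inl rfl)
        · exact .inr (.inr (.inl ⟨rfl, h⟩))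
      · rcases lt_trichotomy (Γ.dist g a) (Γ.dist g b) with h | h | h
        · exact .inr (.inr (.inr ⟨Ne.symm hab, h⟩))
        · exact absurd (dist_injective h₁.1 h₂.1 h) hab
        · exact .inl (.inr ⟨hab, h⟩)

lemma lexLt_trichotomy_from {p : ℕ} {g : Γ.Dart} {L₁ L₂ : List Γ.Dart}
    (h₁ : IsRouteFrom g.fst L₁) (h₂ : IsRouteFrom g.fst L₂) :
    Γ.LexLt p g L₁ L₂ ∨ L₁ = L₂ ∨ Γ.LexLt p g L₂ L₁ := by
  rcases L₁ with _ | ⟨a, as⟩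
  · exact h₁.elim
  rcases L₂ with _ | ⟨b, bs⟩
  · exact h₂.elim
  by_cases hab : a = b
  · subst hab
    rcases lexLt_trichotomy (p := p + 1) h₁.2 h₂.2 with h | rfl | h
    · exact .inl (.inl ⟨rfl, h⟩)
    · exact .inr (.inl rfl)
    · exact .inr (.inr (.inl ⟨rfl, h⟩))
  · rcases lt_trichotomy (Γ.dist g a) (Γ.dist g b) with h | h | h
    · exact .inr (.inr (.inr ⟨Ne.symm hab, h⟩))
    · exact absurd (dist_injective h₁.1.symm h₂.1.symm h) hab
    · exact .inl (.inr ⟨hab, h⟩)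

end Lex

/-! ### Cyclic orders determined by their triples -/

section Glued

variable {W : Type w} [Finite W] {Δ : BrauerTree W}

lemma gluedNext_unique {α : Type*} {lt : α → α → Prop} [IsStrictTotalOrder α lt] {a b b' : α}
    (h : GluedNext lt a b) (h' : GluedNext lt a b') : b = b' := by
  rcases trichotomous_of lt b b' with hlt | rfl | hlt
  · rcases h with ⟨h1, h2⟩ | ⟨h1, h2⟩
    · rcases h' with ⟨h3, h4⟩ | ⟨h3, h4⟩
      · exact absurd ⟨hlt, h3⟩ (h2 b')
      · exact absurd h1 (h3 b)
    · exact absurd hlt (h2 b')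
  · rfl
  · rcases h' with ⟨h1, h2⟩ | ⟨h1, h2⟩
    · rcases h with ⟨h3, h4⟩ | ⟨h3, h4⟩
      · exact absurd ⟨hlt, h3⟩ (h2 b)
      · exact absurd h1 (h3 b')
    · exact absurd hlt (h2 b)

/-- A linear order on the edges at `z` such that all decreasing triples are met in this order when
one goes around `z` once. -/
lemma gluedNext_of_triples {z : W} {lt : {d : Δ.Dart // d.fst = z} → {d : Δ.Dart // d.fst = z} → Prop}
    [IsStrictTotalOrder _ lt]
    (H : ∀ a b d, lt b a → lt d b → Δ.dist a.1 b.1 + Δ.dist b.1 d.1 ≤ Δ.period a.1)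
    (a b : {d : Δ.Dart // d.fst = z}) (hab : Δ.next a.1 = b.1) : GluedNext lt a b := by
  have hf : ∀ x y : {d : Δ.Dart // d.fst = z}, x.1.fst = y.1.fst := fun x y => x.2.trans y.2.symm
  have hp : ∀ x : {d : Δ.Dart // d.fst = z}, Δ.period x.1 = Δ.period a.1 := fun x =>
    period_eq (hf x a)
  have hne : ∀ {x y}, lt x y → x.1 ≠ y.1 := by
    intro x y h e
    rw [Subtype.ext e] at h
    exact irrefl_of lt y h
  have hnext : ∀ x : {d : Δ.Dart // d.fst = z}, a.1 ≠ x.1 → b.1 ≠ x.1 → Δ.dist a.1 x.1 = Δ.dist b.1 x.1 + 1 := by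
    intro x h1 h2
    have hpos := dist_pos (hf b x) h2
    have hsum := dist_add_dist_symm (hf x b) (Ne.symm h2)
    have hpos' := dist_pos (hf x b) (Ne.symm h2)
    rw [hp] at hsum
    have hk : (Δ.next)^[Δ.dist b.1 x.1 + 1] a.1 = x.1 := by
      rw [Function.iterate_succ_apply, hab, iterate_dist (hf b x)]
    refine dist_eq (lt_of_le_of_ne (by omega) fun he => h1 ?_) hk
    rw [← hk, he, Function.iterate_minimalPeriod]
  have key : ∀ x : {d : Δ.Dart // d.fst = z}, a.1 ≠ x.1 → b.1 ≠ x.1 →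
      Δ.period a.1 < Δ.dist a.1 x.1 + Δ.dist x.1 b.1 := by
    intro x h1 h2
    have := hnext x h1 h2
    have hsum := dist_add_dist_symm (hf x b) (Ne.symm h2)
    rw [hp] at hsum
    omega
  by_cases hE : a = b
  · subst hE
    have hall : ∀ x, x = a := by
      intro x
      obtain ⟨k, -, hk⟩ := exists_iterate (hf a x)
      rw [Function.iterate_fixed hab] at hk
      exact Subtype.ext hk.symm
    exact .inr ⟨fun x h => hne h (congrArg _ (hall x)), fun x h => hne h (congrArg _ (hall x).symm)⟩
  have hE' : a.1 ≠ b.1 := fun h => hE (Subtype.ext h)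
  have hba := dist_add_dist_symm (hf a b) hE'
  have hab1 : Δ.dist a.1 b.1 = 1 := by
    refine dist_eq (lt_of_le_of_ne (period_pos _) fun he => hE' ?_) hab
    have := iterate_period a.1
    rw [← hab]
    rw [← he] at this
    exact this.symm
  rcases trichotomous_of lt a b with h | h | h
  · refine .inr ⟨fun x hx => ?_, fun x hx => ?_⟩
    · have hxb : b.1 ≠ x.1 := (hne (trans_of lt hx h)).symm
      have h1 := H b a x h hx
      have h2 := hnext x (hne hx).symm hxb
      have h3 := dist_pos (hf b x) hxb
      rw [hp] at h1
      omega
    · have hxa : a.1 ≠ x.1 := hne (trans_of lt h hx)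
      have h1 := H x b a hx h
      have h2 := key x hxa (hne hx)
      have h3 := dist_add_dist_symm (hf a x) hxa
      have h4 := dist_lt (hf a x)
      rw [hp] at h1
      omega
  · exact absurd h hE
  · refine .inl ⟨h, fun x ⟨h1, h2⟩ => ?_⟩
    have := H a x b h2 h1
    have h3 := key x (hne h2).symm (hne h1)
    omega

end Glued

end BrauerTree

/-! ### Computations in the Brauer tree algebra -/

namespace BrauerTree

section Relations

variable {V : Type v} [Finite V] (Γ : BrauerTree V) (K : Type u) [Field K]

/-- The element of the Brauer tree algebra given by the `k` consecutive arrows of the `A`-cycle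
`d.fst` that start in `d.edge`. -/
noncomputable def pathN (d : Γ.Dart) (k : ℕ) : Γ.Alg K := Γ.quot K (Γ.freePath K d k)

lemma quot_eq_of_rel {x y : FreeAlgebra K Γ.Gen} (h : Γ.Rel K x y) : Γ.quot K x = Γ.quot K y :=
  RingQuot.mkAlgHom_rel K h

lemma quot_surjective : Function.Surjective (Γ.quot K) := RingQuot.mkAlgHom_surjective K _

lemma e_mul_self (i : Γ.Edge) : Γ.e K i * Γ.e K i = Γ.e K i := by
  simpa [e] using Γ.quot_eq_of_rel K (Rel.idem_mul_self i)

lemma e_mul_e_of_ne {i j : Γ.Edge} (h : i ≠ j) : Γ.e K i * Γ.e K j = 0 := by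
  simpa [e] using Γ.quot_eq_of_rel K (Rel.idem_mul_idem i j h)

lemma sum_e : ∑ i : Γ.Edge, Γ.e K i = 1 := by
  simpa [e] using Γ.quot_eq_of_rel K Rel.sum_idem

lemma pathN_zero (d : Γ.Dart) : Γ.pathN K d 0 = 1 := by simp [pathN, freePath]

lemma pathN_one (d : Γ.Dart) : Γ.pathN K d 1 = Γ.quot K (Γ.freeArrow K d) := by
  simp [pathN, freePath]

lemma freePath_add (d : Γ.Dart) (k l : ℕ) :
    Γ.freePath K d (k + l) = Γ.freePath K d k * Γ.freePath K ((Γ.next)^[k] d) l := by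
  simp only [freePath, List.range_add, List.map_append, List.prod_append, List.map_map]
  congr 3
  funext j
  simp [← Function.iterate_add_apply, add_comm]

lemma pathN_add (d : Γ.Dart) (k l : ℕ) :
    Γ.pathN K d (k + l) = Γ.pathN K d k * Γ.pathN K ((Γ.next)^[k] d) l := by
  rw [pathN, freePath_add, map_mul, pathN, pathN]

lemma pathN_succ (d : Γ.Dart) (k : ℕ) :
    Γ.pathN K d (k + 1) = Γ.pathN K d k * Γ.pathN K ((Γ.next)^[k] d) 1 := pathN_add ..

lemma pathN_succ' (d : Γ.Dart) (k : ℕ) :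
    Γ.pathN K d (k + 1) = Γ.pathN K d 1 * Γ.pathN K (Γ.next d) k := by
  rw [add_comm, pathN_add]; rfl

lemma e_mul_arrow (d : Γ.Dart) : Γ.e K (Γ.toEdge d) * Γ.pathN K d 1 = Γ.pathN K d 1 := by
  rw [pathN_one]
  simpa [e] using Γ.quot_eq_of_rel K (Rel.idem_mul_arrow d)

lemma arrow_mul_e (d : Γ.Dart) :
    Γ.pathN K d 1 * Γ.e K (Γ.toEdge (Γ.next d)) = Γ.pathN K d 1 := by
  rw [pathN_one]
  simpa [e] using Γ.quot_eq_of_rel K (Rel.arrow_mul_idem d)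

lemma arrow_mul_arrow_symm (d : Γ.Dart) :
    Γ.pathN K d 1 * Γ.pathN K (Γ.next d).symm 1 = 0 := by
  rw [pathN_one, pathN_one]
  simpa using Γ.quot_eq_of_rel K (Rel.arrow_mul_arrow d)

lemma pathN_period (d : Γ.Dart) :
    Γ.pathN K d (Γ.period d) = Γ.pathN K d.symm (Γ.period d.symm) :=
  Γ.quot_eq_of_rel K (Rel.cycle_eq d)

variable {Γ}

lemma e_mul_pathN (d : Γ.Dart) {k : ℕ} (hk : 0 < k) :
    Γ.e K (Γ.toEdge d) * Γ.pathN K d k = Γ.pathN K d k := by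
  obtain ⟨k, rfl⟩ := Nat.exists_eq_succ_of_ne_zero hk.ne'
  rw [pathN_succ', ← mul_assoc, e_mul_arrow]

lemma pathN_mul_e (d : Γ.Dart) {k : ℕ} (hk : 0 < k) :
    Γ.pathN K d k * Γ.e K (Γ.toEdge ((Γ.next)^[k] d)) = Γ.pathN K d k := by
  obtain ⟨k, rfl⟩ := Nat.exists_eq_succ_of_ne_zero hk.ne'
  rw [pathN_succ, mul_assoc, Function.iterate_succ_apply', arrow_mul_e]

lemma pathN_mul_pathN_symm (d : Γ.Dart) {k l : ℕ} (hk : 0 < k) (hl : 0 < l) :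
    Γ.pathN K d k * Γ.pathN K ((Γ.next)^[k] d).symm l = 0 := by
  obtain ⟨k, rfl⟩ := Nat.exists_eq_succ_of_ne_zero hk.ne'
  obtain ⟨l, rfl⟩ := Nat.exists_eq_succ_of_ne_zero hl.ne'
  rw [pathN_succ, pathN_succ' Γ K _ l, Function.iterate_succ_apply', mul_assoc,
    ← mul_assoc (Γ.pathN K _ 1), arrow_mul_arrow_symm, zero_mul, mul_zero]

lemma pathN_eq_zero (d : Γ.Dart) {k : ℕ} (hk : Γ.period d < k) : Γ.pathN K d k = 0 := by
  obtain ⟨l, rfl⟩ := Nat.exists_eq_add_of_lt hk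
  have h := pathN_mul_pathN_symm K d.symm (period_pos d.symm) l.succ_pos
  rw [iterate_period, SimpleGraph.Dart.symm_symm] at h
  rw [add_assoc, pathN_add, iterate_period, pathN_period, h]

lemma pathN_mul_arrow (d d' : Γ.Dart) {k : ℕ} (hk : 0 < k) :
    Γ.pathN K d k * Γ.pathN K d' 1 = Γ.pathN K d (k + 1) ∨
      Γ.pathN K d k * Γ.pathN K d' 1 = 0 := by
  by_cases h : Γ.toEdge d' = Γ.toEdge ((Γ.next)^[k] d)
  · rcases toEdge_eq_iff.1 h with rfl | rfl
    · exact .inl (pathN_succ ..).symm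
    · exact .inr (pathN_mul_pathN_symm K d hk one_pos)
  · right
    rw [← pathN_mul_e K d hk, ← e_mul_arrow, mul_assoc, ← mul_assoc (Γ.e K _),
      e_mul_e_of_ne _ _ (Ne.symm h), zero_mul, mul_zero]

variable (Γ) in
/-- The trivial paths and the directed paths on `A`-cycles. -/
def paths : Set (Γ.Alg K) :=
  {x | (∃ i, x = Γ.e K i) ∨ ∃ d k, 0 < k ∧ x = Γ.pathN K d k}

lemma mul_gen_mem_span_paths {x : Γ.Alg K} (hx : x ∈ paths Γ K) (a : Γ.Gen) :
    x * Γ.quot K (FreeAlgebra.ι K a) ∈ Submodule.span K (paths Γ K) := by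
  rcases a with j | d'
  · change x * Γ.e K j ∈ _
    rcases hx with ⟨i, rfl⟩ | ⟨d, k, hk, rfl⟩
    · by_cases h : i = j
      · subst h
        rw [e_mul_self]
        exact Submodule.subset_span (.inl ⟨i, rfl⟩)
      · rw [e_mul_e_of_ne _ _ h]
        exact zero_mem _
    · by_cases h : Γ.toEdge ((Γ.next)^[k] d) = j
      · subst h
        rw [pathN_mul_e K d hk]
        exact Submodule.subset_span (.inr ⟨d, k, hk, rfl⟩)
      · rw [← pathN_mul_e K d hk, mul_assoc, e_mul_e_of_ne _ _ h, mul_zero]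
        exact zero_mem _
  · rw [← freeArrow, ← pathN_one]
    rcases hx with ⟨i, rfl⟩ | ⟨d, k, hk, rfl⟩
    · by_cases h : i = Γ.toEdge d'
      · subst h
        rw [e_mul_arrow]
        exact Submodule.subset_span (.inr ⟨d', 1, one_pos, rfl⟩)
      · rw [← e_mul_arrow, ← mul_assoc, e_mul_e_of_ne _ _ h, zero_mul]
        exact zero_mem _
    · rcases pathN_mul_arrow K d d' hk with h | h <;> rw [h]
      · exact Submodule.subset_span (.inr ⟨d, _, k.succ_pos, rfl⟩)
      · exact zero_mem _

lemma mem_span_paths (x : Γ.Alg K) : x ∈ Submodule.span K (paths Γ K) := by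
  have H : ∀ (y : FreeAlgebra K Γ.Gen), ∀ s ∈ Submodule.span K (paths Γ K),
      s * Γ.quot K y ∈ Submodule.span K (paths Γ K) := by
    intro y
    induction y using FreeAlgebra.induction with
    | grade0 r =>
      intro s hs
      rw [AlgHom.commutes, ← Algebra.commutes, ← Algebra.smul_def]
      exact Submodule.smul_mem _ _ hs
    | grade1 a =>
      intro s hs
      induction hs using Submodule.span_induction with
      | mem x hx => exact mul_gen_mem_span_paths K hx a
      | zero => rw [zero_mul]; exact zero_mem _
      | add x y _ _ hx hy => rw [add_mul]; exact add_mem hx hy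
      | smul r x _ hx => rw [smul_mul_assoc]; exact Submodule.smul_mem _ _ hx
    | mul a b ha hb =>
      intro s hs
      rw [map_mul, ← mul_assoc]
      exact hb _ (ha _ hs)
    | add a b ha hb =>
      intro s hs
      rw [map_add, mul_add]
      exact add_mem (ha _ hs) (hb _ hs)
  obtain ⟨y, rfl⟩ := Γ.quot_surjective K x
  have h1 : (1 : Γ.Alg K) ∈ Submodule.span K (paths Γ K) := by
    rw [← sum_e]
    exact Submodule.sum_mem _ fun i _ => Submodule.subset_span (.inl ⟨i, rfl⟩)
  simpa using H y 1 h1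

lemma e_mul_mul_e_mem {a b : Γ.Dart} (hab : a.fst = b.fst) (hne : a ≠ b) (x : Γ.Alg K) :
    Γ.e K (Γ.toEdge a) * x * Γ.e K (Γ.toEdge b) ∈
      Submodule.span K {Γ.pathN K a (Γ.dist a b)} := by
  induction mem_span_paths K x using Submodule.span_induction with
  | zero => rw [mul_zero, zero_mul]; exact zero_mem _
  | add x y _ _ hx hy => rw [mul_add, add_mul]; exact add_mem hx hy
  | smul r x _ hx => rw [mul_smul_comm, smul_mul_assoc]; exact Submodule.smul_mem _ _ hx
  | mem x hx =>
    rcases hx with ⟨i, rfl⟩ | ⟨d, k, hk, rfl⟩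
    · by_cases h : Γ.toEdge a = i
      · subst h
        rw [e_mul_self, e_mul_e_of_ne _ _ fun h => hne (eq_of_toEdge_eq h hab)]
        exact zero_mem _
      · rw [e_mul_e_of_ne _ _ h, zero_mul]
        exact zero_mem _
    · by_cases h : Γ.toEdge d = Γ.toEdge a
      swap
      · rw [← e_mul_pathN K d hk, ← mul_assoc, e_mul_e_of_ne _ _ (Ne.symm h), zero_mul, zero_mul]
        exact zero_mem _
      by_cases h' : Γ.toEdge ((Γ.next)^[k] d) = Γ.toEdge b
      swap
      · rw [← pathN_mul_e K d hk, mul_assoc, mul_assoc, e_mul_e_of_ne _ _ h', mul_zero, mul_zero]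
        exact zero_mem _
      obtain ⟨rfl, h''⟩ := fst_eq_of_toEdge_eq hab hne h h' (fst_iterate k d).symm
      rw [← h', e_mul_pathN K d hk, pathN_mul_e K d hk]
      rcases lt_trichotomy k (Γ.period d) with hlt | rfl | hlt
      · rw [dist_eq hlt h'']
        exact Submodule.mem_span_singleton_self _
      · exact absurd ((iterate_period d).symm.trans h'') hne
      · rw [pathN_eq_zero K d hlt]
        exact zero_mem _

/-- A product of morphisms between three summands at a vertex vanishes if they go around the vertex
more than once. -/
lemma dist_add_dist_le_of_mul_ne_zero {a b d : Γ.Dart} (hab : a.fst = b.fst) (hbd : b.fst = d.fst)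
    (hne : a ≠ b) (hne' : b ≠ d) {x y : Γ.Alg K}
    (hx : Γ.e K (Γ.toEdge a) * x * Γ.e K (Γ.toEdge b) = x)
    (hy : Γ.e K (Γ.toEdge b) * y * Γ.e K (Γ.toEdge d) = y) (hxy : x * y ≠ 0) :
    Γ.dist a b + Γ.dist b d ≤ Γ.period a := by
  by_contra! hlt
  obtain ⟨r, hr⟩ := Submodule.mem_span_singleton.1 (e_mul_mul_e_mem K hab hne x)
  obtain ⟨s, hs⟩ := Submodule.mem_span_singleton.1 (e_mul_mul_e_mem K hbd hne' y)
  have h := pathN_add Γ K a (Γ.dist a b) (Γ.dist b d)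
  rw [pathN_eq_zero K a hlt, iterate_dist hab] at h
  rw [← hx, ← hy, ← hr, ← hs, smul_mul_smul_comm, ← h, smul_zero] at hxy
  exact hxy rfl

/-- Different trivial paths are not equivalent as idempotents. -/
lemma eq_of_mul_eq_e {i j : Γ.Edge} {x y : Γ.Alg K} (hx : x * y = Γ.e K i) (hy : y * x = Γ.e K j) :
    i = j := by
  classical
  by_contra hne
  let f : FreeAlgebra K Γ.Gen →ₐ[K] K := FreeAlgebra.lift K fun
    | Gen.idem l => if l = i then 1 else 0
    | Gen.arrow _ => 0
  have hpath : ∀ d k, 0 < k → f (Γ.freePath K d k) = 0 := by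
    intro d k hk
    obtain ⟨k, rfl⟩ := Nat.exists_eq_succ_of_ne_zero hk.ne'
    rw [freePath_add Γ K d k 1, map_mul]
    simp [f, freePath]
  have hf : ∀ ⦃x y⦄, Γ.Rel K x y → f x = f y := by
    intro x y h
    induction h with
    | idem_mul_self l => simp [f]
    | idem_mul_idem l m h =>
      by_cases hl : l = i
      · simp [f, hl ▸ h.symm]
      · simp [f, hl]
    | sum_idem => simp [f]
    | idem_mul_arrow d => simp [f]
    | arrow_mul_idem d => simp [f]
    | arrow_mul_arrow d => simp [f]
    | cycle_eq d => rw [hpath _ _ (period_pos d), hpath _ _ (period_pos d.symm)]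
  let χ : Γ.Alg K →ₐ[K] K := RingQuot.liftAlgHom K ⟨f, hf⟩
  have hχ : ∀ x, χ (Γ.quot K x) = f x := fun x => RingQuot.liftAlgHom_mkAlgHom_apply K f hf x
  have h1 : χ (Γ.e K i) = 1 := by rw [e, hχ]; simp [f]
  have h2 : χ (Γ.e K j) = 0 := by rw [e, hχ]; simp [f, Ne.symm hne]
  rw [← hx, map_mul, mul_comm, ← map_mul, hy, h2] at h1
  exact zero_ne_one h1

end Relations

/-! ### The uniserial module of an `A`-cycle -/

section Uniserial

variable {V : Type v} [Finite V] {Γ : BrauerTree V} (K : Type u) [Field K]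

open scoped Classical

attribute [local instance] Fintype.ofFinite

/-- The representation on the half-edges at the vertex `g.fst`, where the arrow that ends in `g` and
all the arrows of other `A`-cycles act as zero, on the free algebra. -/
noncomputable def freeRep (g : Γ.Dart) :
    FreeAlgebra K Γ.Gen →ₐ[K]
      Matrix {d : Γ.Dart // d.fst = g.fst} {d : Γ.Dart // d.fst = g.fst} K :=
  FreeAlgebra.lift K fun
    | Gen.idem i => Matrix.diagonal fun d => if Γ.toEdge d.1 = i then 1 else 0
    | Gen.arrow d => Matrix.of fun x y => if x.1 = d ∧ y.1 = Γ.next d ∧ y.1 ≠ g then 1 else 0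

lemma freeRep_idem (g : Γ.Dart) (i : Γ.Edge) : freeRep K g (Γ.freeIdem K i) =
    Matrix.diagonal fun d => if Γ.toEdge d.1 = i then 1 else 0 := by
  simp [freeRep]

lemma freeRep_arrow (g d : Γ.Dart) : freeRep K g (Γ.freeArrow K d) =
    Matrix.of fun x y => if x.1 = d ∧ y.1 = Γ.next d ∧ y.1 ≠ g then 1 else 0 := by
  simp [freeRep]

lemma freeRep_arrow_of_ne {g d : Γ.Dart} (h : d.fst ≠ g.fst) :
    freeRep K g (Γ.freeArrow K d) = 0 := by
  rw [freeRep_arrow]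
  ext x y
  simp only [Matrix.of_apply, Matrix.zero_apply, ite_eq_right_iff]
  rintro ⟨rfl, -⟩
  exact absurd x.2 h

lemma freeRep_path_eq_zero {g d : Γ.Dart} {k j : ℕ} (hj : j < k)
    (h : freeRep K g (Γ.freeArrow K ((Γ.next)^[j] d)) = 0) :
    freeRep K g (Γ.freePath K d k) = 0 := by
  rw [freePath, map_list_prod, List.map_map]
  exact List.prod_eq_zero (List.mem_map.2 ⟨j, List.mem_range.2 hj, h⟩)

lemma freeRep_period (g d : Γ.Dart) : freeRep K g (Γ.freePath K d (Γ.period d)) = 0 := by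
  by_cases h : d.fst = g.fst
  · obtain ⟨k, hk, hk'⟩ := exists_iterate (d := Γ.next d) (d' := g) ((Γ.fst_next d).trans h)
    rw [← period_eq (Γ.fst_next d).symm] at hk
    refine freeRep_path_eq_zero K hk ?_
    rw [freeRep_arrow]
    ext x y
    simp only [Matrix.of_apply, Matrix.zero_apply, ite_eq_right_iff]
    rintro ⟨-, h1, h2⟩
    rw [← Function.iterate_succ_apply' Γ.next, Function.iterate_succ_apply, hk'] at h1
    exact absurd h1 h2
  · exact freeRep_path_eq_zero K (period_pos d) (freeRep_arrow_of_ne K h)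

lemma freeRep_rel (g : Γ.Dart) ⦃x y : FreeAlgebra K Γ.Gen⦄ (h : Γ.Rel K x y) :
    freeRep K g x = freeRep K g y := by
  induction h with
  | idem_mul_self i => simp [freeRep_idem]
  | idem_mul_idem i j h =>
    simp only [map_mul, freeRep_idem, Matrix.diagonal_mul_diagonal, map_zero]
    rw [← Matrix.diagonal_zero]
    congr 1
    funext d
    by_cases hi : Γ.toEdge d.1 = i
    · simp [hi, h]
    · simp [hi]
  | sum_idem =>
    rw [map_sum, map_one, ← Matrix.diagonal_one]
    simp only [freeRep_idem]
    ext x y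
    rw [Matrix.sum_apply]
    by_cases hxy : x = y
    · subst hxy
      simp
    · simp [hxy]
  | idem_mul_arrow d =>
    rw [map_mul, freeRep_idem, freeRep_arrow]
    ext x y
    by_cases hx : x.1 = d <;> simp [hx]
  | arrow_mul_idem d =>
    rw [map_mul, freeRep_idem, freeRep_arrow]
    ext x y
    by_cases hy : y.1 = Γ.next d <;> simp [hy]
  | arrow_mul_arrow d =>
    rw [map_mul, map_zero]
    by_cases h : d.fst = g.fst
    · rw [freeRep_arrow_of_ne K (d := (Γ.next d).symm), mul_zero]
      rw [← h, ← Γ.fst_next d]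
      exact fst_symm_ne _
    · rw [freeRep_arrow_of_ne K h, zero_mul]
  | cycle_eq d => exact (freeRep_period K g d).trans (freeRep_period K g d.symm).symm

/-- The representation on the half-edges at the vertex `g.fst`, where the arrow that ends in `g` and
all the arrows of other `A`-cycles act as zero. -/
noncomputable def rep (g : Γ.Dart) : Γ.Alg K →ₐ[K]
    Matrix {d : Γ.Dart // d.fst = g.fst} {d : Γ.Dart // d.fst = g.fst} K :=
  RingQuot.liftAlgHom K ⟨freeRep K g, freeRep_rel K g⟩

lemma rep_quot (g : Γ.Dart) (x : FreeAlgebra K Γ.Gen) : rep K g (Γ.quot K x) = freeRep K g x :=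
  RingQuot.liftAlgHom_mkAlgHom_apply K _ (freeRep_rel K g) x

lemma rep_pathN_eq_zero {g d : Γ.Dart} {k : ℕ} (h : d.fst ≠ g.fst) (hk : 0 < k) :
    rep K g (Γ.pathN K d k) = 0 := by
  rw [pathN, rep_quot]
  exact freeRep_path_eq_zero K hk (freeRep_arrow_of_ne K h)

lemma rep_e {g a : Γ.Dart} (ha : a.fst = g.fst) :
    rep K g (Γ.e K (Γ.toEdge a)) = Matrix.single ⟨a, ha⟩ ⟨a, ha⟩ 1 := by
  rw [e, rep_quot, freeRep_idem, ← Matrix.diagonal_single]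
  congr 1
  funext d
  by_cases hd : d = ⟨a, ha⟩
  · subst hd
    simp
  · rw [Pi.single_eq_of_ne hd, if_neg]
    exact fun h => hd (Subtype.ext (eq_of_toEdge_eq h (d.2.trans ha.symm)))

lemma rep_arrow {g a b : Γ.Dart} (ha : a.fst = g.fst) (hb : b.fst = g.fst) (hab : Γ.next a = b)
    (hbg : b ≠ g) : rep K g (Γ.pathN K a 1) = Matrix.single ⟨a, ha⟩ ⟨b, hb⟩ 1 := by
  rw [pathN_one, rep_quot, freeRep_arrow, hab]
  ext x y
  simp only [Matrix.of_apply, Matrix.single_apply, Subtype.ext_iff]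
  refine if_congr ?_ rfl rfl
  constructor
  · rintro ⟨h1, h2, -⟩
    exact ⟨h1.symm, h2.symm⟩
  · rintro ⟨h1, h2⟩
    exact ⟨h1.symm, h2.symm, h2 ▸ hbg⟩

lemma rep_e_mul_pathN {g a : Γ.Dart} (ha : a.fst = g.fst) (k : ℕ)
    (hk : Γ.dist g a + k < Γ.period g) :
    rep K g (Γ.e K (Γ.toEdge a) * Γ.pathN K a k) =
      Matrix.single ⟨a, ha⟩ ⟨(Γ.next)^[k] a, (fst_iterate k a).trans ha⟩ 1 := by
  induction k with
  | zero => rw [pathN_zero, mul_one, rep_e K ha]; rfl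
  | succ k ih =>
    have hne : (Γ.next)^[k + 1] a ≠ g := by
      intro h
      have h' : (Γ.next)^[Γ.dist g a + (k + 1)] g = g := by
        rw [add_comm, Function.iterate_add_apply, iterate_dist ha.symm, h]
      exact Function.not_isPeriodicPt_of_pos_of_lt_minimalPeriod (by omega) hk h'
    rw [pathN_succ, ← mul_assoc, map_mul, ih (by omega),
      rep_arrow K ((fst_iterate k a).trans ha) ((fst_iterate (k + 1) a).trans ha)
        (Function.iterate_succ_apply' ..).symm hne, Matrix.single_mul_single_same, mul_one]

end Uniserial

end BrauerTree

/-! ### Complexes in two degrees -/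

section Double

variable {C : Type*} [Category* C] [Preadditive C] [HasZeroObject C]

/-- The differential `f` as a complex in the degrees `0` and `1`. -/
noncomputable abbrev doubleUp {X₀ X₁ : C} (f : X₀ ⟶ X₁) : CochainComplex C ℤ :=
  HomologicalComplex.double f (show (ComplexShape.up ℤ).Rel 0 1 from rfl)

/-- The morphism of complexes in the degrees `0` and `1` given by a commutative square. -/
noncomputable def doubleUpMap {X₀ X₁ Y₀ Y₁ : C} {f : X₀ ⟶ X₁} {g : Y₀ ⟶ Y₁}
    (φ₀ : X₀ ⟶ Y₀) (φ₁ : X₁ ⟶ Y₁) (h : φ₀ ≫ g = f ≫ φ₁) : doubleUp f ⟶ doubleUp g :=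
  HomologicalComplex.mkHomFromDouble _ zero_ne_one
    (φ₀ ≫ (HomologicalComplex.doubleXIso₀ g _).inv)
    (φ₁ ≫ (HomologicalComplex.doubleXIso₁ g _ zero_ne_one).inv)
    (by rw [HomologicalComplex.double_d _ _ zero_ne_one]; simp [reassoc_of% h])
    (fun k _ => by rw [HomologicalComplex.double_d_eq_zero₀ _ _ _ _ one_ne_zero, comp_zero])

lemma doubleUpMap_f_one {X₀ X₁ Y₀ Y₁ : C} {f : X₀ ⟶ X₁} {g : Y₀ ⟶ Y₁}
    (φ₀ : X₀ ⟶ Y₀) (φ₁ : X₁ ⟶ Y₁) (h : φ₀ ≫ g = f ≫ φ₁) :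
    (doubleUpMap φ₀ φ₁ h).f 1 = (HomologicalComplex.doubleXIso₁ f _ zero_ne_one).hom ≫ φ₁ ≫
      (HomologicalComplex.doubleXIso₁ g _ zero_ne_one).inv :=
  HomologicalComplex.mkHomFromDouble_f₁ ..

lemma doubleUpMap_comp_f_one {X₀ X₁ Y₀ Y₁ Z₀ Z₁ : C} {f : X₀ ⟶ X₁} {g : Y₀ ⟶ Y₁} {k : Z₀ ⟶ Z₁}
    (φ₀ : X₀ ⟶ Y₀) (φ₁ : X₁ ⟶ Y₁) (h : φ₀ ≫ g = f ≫ φ₁)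
    (ψ₀ : Y₀ ⟶ Z₀) (ψ₁ : Y₁ ⟶ Z₁) (h' : ψ₀ ≫ k = g ≫ ψ₁) :
    (doubleUpMap φ₀ φ₁ h ≫ doubleUpMap ψ₀ ψ₁ h').f 1 =
      (HomologicalComplex.doubleXIso₁ f _ zero_ne_one).hom ≫ (φ₁ ≫ ψ₁) ≫
        (HomologicalComplex.doubleXIso₁ k _ zero_ne_one).inv := by
  rw [HomologicalComplex.comp_f, doubleUpMap_f_one, doubleUpMap_f_one]
  simp

lemma exists_factor_of_quotient_map_eq_zero {X₀ X₁ Y₀ Y₁ : C} {f : X₀ ⟶ X₁} {g : Y₀ ⟶ Y₁}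
    {φ : doubleUp f ⟶ doubleUp g} {φ₁ : X₁ ⟶ Y₁}
    (hφ : φ.f 1 = (HomologicalComplex.doubleXIso₁ f _ zero_ne_one).hom ≫ φ₁ ≫
      (HomologicalComplex.doubleXIso₁ g _ zero_ne_one).inv)
    (h : (HomotopyCategory.quotient C (ComplexShape.up ℤ)).map φ = 0) :
    ∃ s : X₁ ⟶ Y₀, φ₁ = s ≫ g := by
  obtain ⟨H⟩ := (HomotopyCategory.quotient_map_eq_zero_iff φ).1 h
  have h1 := H.comm 1
  have hr : (ComplexShape.up ℤ).Rel 0 1 := rfl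
  rw [dNext_eq _ (show (ComplexShape.up ℤ).Rel 1 2 from rfl),
    prevD_eq _ hr,
    HomologicalComplex.double_d_eq_zero₀ _ _ _ _ (one_ne_zero : (1 : ℤ) ≠ 0),
    HomologicalComplex.double_d _ hr zero_ne_one, zero_comp, zero_add,
    HomologicalComplex.zero_f, add_zero, hφ] at h1
  refine ⟨(HomologicalComplex.doubleXIso₁ f hr zero_ne_one).inv ≫ H.hom 1 0 ≫
    (HomologicalComplex.doubleXIso₀ g hr).hom, ?_⟩
  rw [← cancel_mono (HomologicalComplex.doubleXIso₁ g hr zero_ne_one).inv,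
    ← cancel_epi (HomologicalComplex.doubleXIso₁ f hr zero_ne_one).hom, h1]
  simp

lemma nonempty_single_iso_doubleUp {X₀ X₁ Y : C} (f : X₀ ⟶ X₁) (h₀ : IsZero X₀) (i : Y ≅ X₁) :
    Nonempty ((HomologicalComplex.single C (ComplexShape.up ℤ) 1).obj Y ≅ doubleUp f) := by
  let ψ : (HomologicalComplex.single C (ComplexShape.up ℤ) 1).obj Y ⟶ doubleUp f :=
    HomologicalComplex.mkHomFromSingle
      (i.hom ≫ (HomologicalComplex.doubleXIso₁ f _ zero_ne_one).inv)
      (fun k _ => by rw [HomologicalComplex.double_d_eq_zero₀ _ _ _ _ one_ne_zero, comp_zero])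
  have hψ : ∀ k, IsIso (ψ.f k) := by
    intro k
    by_cases h1 : k = 1
    · subst h1
      rw [HomologicalComplex.mkHomFromSingle_f]
      infer_instance
    · have hs := HomologicalComplex.isZero_single_obj_X (ComplexShape.up ℤ) 1 Y k h1
      have ht : IsZero ((doubleUp f).X k) := by
        by_cases h0 : k = 0
        · subst h0
          exact h₀.of_iso (HomologicalComplex.doubleXIso₀ f _)
        · exact HomologicalComplex.isZero_double_X f _ k h0 h1
      have : ψ.f k = (hs.iso ht).hom := hs.eq_of_src _ _
      rw [this]
      infer_instance
  have := HomologicalComplex.Hom.isIso_of_components ψ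
  exact ⟨asIso ψ⟩

end Double

namespace BrauerTree

section ListComplex

variable {V : Type v} [Finite V] {Γ : BrauerTree V} (K : Type u) [Field K]

open scoped Classical in
/-- The component of the differential of the complex with the marked vertices `L` between the
positions `k` and `l`. -/
noncomputable def listCoeff (L : List Γ.Dart) (k l : Fin L.length) : Γ.Alg K :=
  if (l : ℕ) = k + 1 then Γ.path K (L.get k).symm (L.get l)
  else if (k : ℕ) = l + 1 then Γ.path K (L.get k) (L.get l).symm
  else 0

/-- The differential of the complex whose marked vertices are listed by `L`, starting with a
sink. -/
noncomputable def listDiff (L : List Γ.Dart) :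
    ((k : {k : Fin L.length // ¬ (Even (k : ℕ) ↔ True)}) → Γ.Proj K (Γ.toEdge (L.get k)))
      →ₗ[Γ.Alg K]
      ((l : {l : Fin L.length // Even (l : ℕ) ↔ True}) → Γ.Proj K (Γ.toEdge (L.get l))) :=
  letI : Fintype {k : Fin L.length // ¬ (Even (k : ℕ) ↔ True)} := Fintype.ofFinite _
  LinearMap.pi fun l => ∑ k : {k : Fin L.length // ¬ (Even (k : ℕ) ↔ True)},
    (Γ.mulMap K (Γ.toEdge (L.get k)) (Γ.toEdge (L.get l)) (listCoeff K L k l)).comp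
      (LinearMap.proj k)

/-- The complex whose marked vertices are listed by `L`, starting with a sink. -/
noncomputable def listComplex (L : List Γ.Dart) : Γ.Cplx K :=
  doubleUp (ModuleCat.ofHom (listDiff K L))

lemma diagram_complex_eq (D : Γ.Diagram) (h : D.sinkFirst) :
    D.complex K = listComplex K D.walk.darts := by
  obtain ⟨a, b, p, hp, h2, s⟩ := D
  obtain rfl : s = True := eq_true h
  rfl

lemma nonempty_stalk_iso (d : Γ.Dart) :
    Nonempty (stalk K 1 (Γ.toEdge d) ≅ listComplex K [d]) := by
  have : IsEmpty {k : Fin [d].length // ¬ (Even (k : ℕ) ↔ True)} := by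
    refine ⟨fun ⟨⟨k, hk⟩, h⟩ => h ?_⟩
    obtain rfl : k = 0 := by simpa using hk
    simp
  let _ : Unique {k : Fin [d].length // Even (k : ℕ) ↔ True} :=
    { default := ⟨⟨0, by simp⟩, by simp⟩
      uniq := by
        rintro ⟨⟨k, hk⟩, h⟩
        obtain rfl : k = 0 := by simpa using hk
        rfl }
  refine nonempty_single_iso_doubleUp _ (ModuleCat.isZero_of_subsingleton _) ?_
  exact (LinearEquiv.piUnique (R := Γ.Alg K) (fun l : {k : Fin [d].length // Even (k : ℕ) ↔ True} =>
    Γ.Proj K (Γ.toEdge ([d].get l)))).symm.toModuleIso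

lemma isRoute_darts {a b : V} (p : Γ.graph.Walk a b) (hp : p.IsPath) (g : Γ.Dart)
    (hg : g.fst = a) (hg' : g.snd ∉ p.support) : IsRoute g p.darts := by
  induction p generalizing g with
  | nil => trivial
  | cons h p ih =>
    rw [SimpleGraph.Walk.cons_isPath_iff] at hp
    refine ⟨hg, ?_, ih hp.1 _ rfl hp.2⟩
    rintro rfl
    exact hg' (by simp)

lemma isRouteFrom_darts {a b : V} (p : Γ.graph.Walk a b) (hp : p.IsPath) (h : 0 < p.length) :
    IsRouteFrom a p.darts := by
  cases p with
  | nil => simp at h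
  | cons h p =>
    rw [SimpleGraph.Walk.cons_isPath_iff] at hp
    exact ⟨rfl, isRoute_darts p hp.1 _ rfl hp.2⟩

lemma Diagram.first_eq (D : Γ.Diagram) {c : V} (k : Fin D.walk.darts.length) (hk : (k : ℕ) = 0)
    (sink : D.IsSink k) (mem : c ∈ (D.dart k).edge)
    (only : ∀ i : Γ.Edge, D.OnDiagram i → c ∈ i.1 → i = Γ.toEdge (D.dart k)) : D.first = c := by
  obtain ⟨a, b, p, hp, h2, s⟩ := D
  match p, hp, h2 with
  | .cons h (.cons h' q), hp, h2 =>
    rename_i v' v''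
    obtain ⟨k, hk'⟩ := k
    obtain rfl : k = 0 := hk
    have hmem : c = a ∨ c = v' := Sym2.mem_iff.1 mem
    rcases hmem with rfl | rfl
    · rfl
    have hs : s := by simpa [Diagram.IsSink] using sink
    have := only (Γ.toEdge ⟨(c, v''), h'⟩) ⟨⟨(c, v''), h'⟩, (⟨(a, c), h⟩ : Γ.Dart).symm,
      ⟨⟨1, by simp⟩, ⟨0, hk'⟩, by simp [Diagram.IsSink, hs], sink, .inr ⟨rfl, rfl, rfl⟩⟩,
      0, Nat.zero_le _, rfl⟩ (Sym2.mem_mk_left ..)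
    rcases toEdge_eq_iff.1 this with e | e
    · exact absurd (congrArg (fun d : Γ.Dart => d.fst) e) h.ne'
    · have e' : v'' = a := congrArg (fun d : Γ.Dart => d.snd) e
      subst e'
      simp [SimpleGraph.Walk.cons_isPath_iff] at hp

/-- A complex that belongs to the sinks on the `A`-cycle `c` is determined by the list of its marked
vertices, which form a path in the tree starting in `c`. -/
lemma IsSinkList.iso {c : V} {S : Γ.Cplx K} {L : List Γ.Dart} (h : Γ.IsSinkList c S L) :
    IsRouteFrom c L ∧ Nonempty (S ≅ listComplex K L) := by
  rcases h with ⟨d, h⟩ | ⟨D, k, hk, sink, mem, only⟩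
  · exact ⟨⟨h, trivial⟩, nonempty_stalk_iso K d⟩
  · have hs : D.sinkFirst := by simpa [Diagram.IsSink, hk] using sink
    refine ⟨?_, ⟨eqToIso (diagram_complex_eq K D hs)⟩⟩
    rw [← D.first_eq k hk sink mem only]
    exact isRouteFrom_darts _ D.isPath (by have := D.two_le; omega)

end ListComplex

end BrauerTree

/-! ### Morphisms between the complexes -/

namespace BrauerTree

section Coordinates

variable {V : Type v} [Finite V] {Γ : BrauerTree V} (K : Type u) [Field K]

lemma mul_e_of_mem_proj {i : Γ.Edge} {x : Γ.Alg K} (hx : x ∈ Γ.Proj K i) : x * Γ.e K i = x := by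
  obtain ⟨y, rfl⟩ := Ideal.mem_span_singleton'.1 hx
  rw [mul_assoc, e_mul_self]

lemma alg_sum_mul {ι : Type*} (s : Finset ι) (f : ι → Γ.Alg K) (x : Γ.Alg K) :
    (∑ i ∈ s, f i) * x = ∑ i ∈ s, f i * x :=
  Finset.sum_mul s f x

lemma mulMap_apply (i j : Γ.Edge) (p : Γ.Alg K) (x : Γ.Proj K i) :
    (Γ.mulMap K i j p x : Γ.Alg K) = x * p * Γ.e K j := by
  simp [mulMap, mul_assoc]

/-- The trivial path at the `i`-th dart of a list, or zero beyond the end of the list. -/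
noncomputable def idemAt (L : List Γ.Dart) (i : ℕ) : Γ.Alg K :=
  if h : i < L.length then Γ.e K (Γ.toEdge L[i]) else 0

/-- The component of the differential between two positions in the list of marked vertices. -/
noncomputable def coeffAt (L : List Γ.Dart) (i m : ℕ) : Γ.Alg K :=
  if h : i < L.length ∧ m < L.length then listCoeff K L ⟨i, h.1⟩ ⟨m, h.2⟩ else 0

variable {K}

open scoped Classical in
/-- The coordinates of an element of a direct sum of projective modules that is indexed by some of
the positions of a list, extended by zero. -/
noncomputable def coord {L : List Γ.Dart} {q : Fin L.length → Prop}
    (x : (k : {k // q k}) → Γ.Proj K (Γ.toEdge (L.get k))) (i : ℕ) : Γ.Alg K :=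
  if h : ∃ hi : i < L.length, q ⟨i, hi⟩ then x ⟨⟨i, h.1⟩, h.2⟩ else 0

lemma coord_coe {L : List Γ.Dart} {q : Fin L.length → Prop}
    (x : (k : {k // q k}) → Γ.Proj K (Γ.toEdge (L.get k))) (k : {k // q k}) :
    coord x (k : Fin L.length) = x k := by
  rw [coord, dif_pos ⟨k.1.2, k.2⟩]

lemma coord_of_not {L : List Γ.Dart} {q : Fin L.length → Prop}
    (x : (k : {k // q k}) → Γ.Proj K (Γ.toEdge (L.get k))) {i : ℕ}
    (h : ¬ ∃ hi : i < L.length, q ⟨i, hi⟩) : coord x i = 0 := by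
  rw [coord, dif_neg h]

lemma coord_mul_idemAt {L : List Γ.Dart} {q : Fin L.length → Prop}
    (x : (k : {k // q k}) → Γ.Proj K (Γ.toEdge (L.get k))) (i : ℕ) :
    coord x i * idemAt K L i = coord x i := by
  by_cases h : ∃ hi : i < L.length, q ⟨i, hi⟩
  · rw [coord, dif_pos h, idemAt, dif_pos h.1]
    exact mul_e_of_mem_proj K (x ⟨⟨i, h.1⟩, h.2⟩).2
  · rw [coord_of_not x h, zero_mul]

lemma coord_ext {L : List Γ.Dart} {q : Fin L.length → Prop}
    {x y : (k : {k // q k}) → Γ.Proj K (Γ.toEdge (L.get k))}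
    (h : ∀ k : {k // q k}, coord x (k : Fin L.length) = coord y (k : Fin L.length)) : x = y := by
  funext k
  rw [Subtype.ext_iff, ← coord_coe, ← coord_coe, h]

lemma coord_listDiff (L : List Γ.Dart) (x) {N : ℕ} (hN : L.length ≤ N) {m : ℕ} (hm : Even m) :
    coord (listDiff K L x) m =
      ∑ i ∈ Finset.range N, coord x i * coeffAt K L i m * idemAt K L m := by
  by_cases hmL : m < L.length
  swap
  · rw [coord_of_not _ fun h => hmL h.1]
    simp [idemAt, hmL]
  let l : {l : Fin L.length // Even (l : ℕ) ↔ True} := ⟨⟨m, hmL⟩, by simpa using hm⟩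
  refine (coord_coe (listDiff K L x) l).trans ?_
  let _ : Fintype {k : Fin L.length // ¬ (Even (k : ℕ) ↔ True)} := Fintype.ofFinite _
  rw [listDiff, LinearMap.pi_apply, LinearMap.sum_apply, AddSubmonoidClass.coe_finsetSum]
  refine Finset.sum_of_injOn (fun k => ((k.1 : Fin L.length) : ℕ)) ?_ ?_ ?_ ?_
  · intro k _ k' _ h
    exact Subtype.ext (Fin.ext h)
  · intro k _
    simpa using k.1.2.trans_le hN
  · intro i _ hi
    rw [coord_of_not, zero_mul, zero_mul]
    rintro ⟨h1, h2⟩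
    exact hi ⟨⟨⟨i, h1⟩, h2⟩, Finset.mem_coe.2 (@Finset.mem_univ _ (Fintype.ofFinite _) _), rfl⟩
  · intro k _
    rw [LinearMap.comp_apply, mulMap_apply, LinearMap.proj_apply, coord_coe, coeffAt,
      dif_pos ⟨k.1.2, hmL⟩, idemAt, dif_pos hmL]
    rfl

/-- The diagonal homomorphism between direct sums of projective modules. -/
noncomputable def diagMap {L L' : List Γ.Dart} (q : ℕ → Prop) (F : ℕ → Γ.Alg K) :
    ((k : {k : Fin L.length // q k}) → Γ.Proj K (Γ.toEdge (L.get k))) →ₗ[Γ.Alg K]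
      ((k : {k : Fin L'.length // q k}) → Γ.Proj K (Γ.toEdge (L'.get k))) :=
  LinearMap.pi fun l => if h : (l : ℕ) < L.length then
    (Γ.mulMap K (Γ.toEdge (L.get ⟨l, h⟩)) (Γ.toEdge (L'.get l)) (F l)).comp
      (LinearMap.proj (⟨⟨l, h⟩, l.2⟩ : {k : Fin L.length // q k})) else 0

lemma coord_diagMap {L L' : List Γ.Dart} (q : ℕ → Prop) (F : ℕ → Γ.Alg K)
    (x : (k : {k : Fin L.length // q k}) → Γ.Proj K (Γ.toEdge (L.get k))) (m : ℕ) :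
    coord (diagMap (L' := L') q F x) m = coord x m * F m * idemAt K L' m := by
  by_cases h : ∃ hm : m < L'.length, q m
  swap
  · rw [coord_of_not _ h]
    by_cases hm : m < L'.length
    · rw [coord_of_not x fun h' => h ⟨hm, h'.2⟩, zero_mul, zero_mul]
    · simp [idemAt, hm]
  obtain ⟨hm, hq⟩ := h
  rw [idemAt, dif_pos hm]
  let l : {k : Fin L'.length // q k} := ⟨⟨m, hm⟩, hq⟩
  refine (coord_coe (diagMap q F x) l).trans ?_
  rw [diagMap, LinearMap.pi_apply]
  by_cases hL : m < L.length
  · rw [dif_pos hL, LinearMap.comp_apply, mulMap_apply, coord, dif_pos ⟨hL, hq⟩]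
    rfl
  · rw [dif_neg hL, coord_of_not x fun h' => hL h'.1]
    simp

lemma diagMap_comm {L L' : List Γ.Dart} {F : ℕ → Γ.Alg K}
    (hF : ∀ i m, Odd i → Even m →
      idemAt K L i * (coeffAt K L i m * idemAt K L m * F m) * idemAt K L' m =
        idemAt K L i * (F i * idemAt K L' i * coeffAt K L' i m) * idemAt K L' m) :
    (listDiff K L').comp (diagMap (fun k => ¬ (Even k ↔ True)) F) =
      (diagMap (fun k => Even k ↔ True) F).comp (listDiff K L) := by
  refine LinearMap.ext fun x => coord_ext fun l => ?_
  have hl : Even ((l : Fin L'.length) : ℕ) := by simpa using l.2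
  rw [LinearMap.comp_apply, LinearMap.comp_apply, coord_diagMap,
    coord_listDiff L' _ (le_max_right L.length L'.length) hl,
    coord_listDiff L _ (le_max_left L.length L'.length) hl, alg_sum_mul, alg_sum_mul]
  refine Finset.sum_congr rfl fun i _ => ?_
  rw [coord_diagMap]
  by_cases hi : Odd i
  · have h := congrArg (coord x i * ·) (hF i _ hi hl)
    simp only [← mul_assoc, coord_mul_idemAt] at h
    exact h.symm
  · rw [coord_of_not x]
    · simp
    · rintro ⟨_, h⟩
      exact hi (by simpa using h)

end Coordinates

section Comparison

variable {V : Type v} [Finite V] {Γ : BrauerTree V} (K : Type u) [Field K]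

open scoped Classical in
/-- The component between two marked vertices at the same position: the identity if they coincide,
the directed path on the `A`-cycle otherwise. -/
noncomputable def link (a b : Γ.Dart) : Γ.Alg K := if a = b then 1 else Γ.path K a b

open scoped Classical in
/-- The components of the morphism from the complex with marked vertices `L` to a smaller one. -/
noncomputable def compare : List Γ.Dart → List Γ.Dart → ℕ → Γ.Alg K
  | a :: _, b :: _, 0 => link K a b
  | a :: as, b :: bs, n + 1 => if a = b then compare as bs n else 0
  | _, _, _ => 0

variable {K}

lemma path_eq (a b : Γ.Dart) : Γ.path K a b = Γ.pathN K a (Γ.dist a b) := rfl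

lemma e_mul_path {a b : Γ.Dart} (h : a.fst = b.fst) (hne : a ≠ b) :
    Γ.e K (Γ.toEdge a) * Γ.path K a b = Γ.path K a b :=
  e_mul_pathN K a (dist_pos h hne)

lemma path_mul_e {a b : Γ.Dart} (h : a.fst = b.fst) (hne : a ≠ b) :
    Γ.path K a b * Γ.e K (Γ.toEdge b) = Γ.path K a b := by
  have := pathN_mul_e K a (dist_pos h hne)
  rwa [iterate_dist h] at this

lemma path_mul_path_symm {a b d : Γ.Dart} (hab : a.fst = b.fst) (hne : a ≠ b)
    (hbd : b.symm.fst = d.fst) (hne' : b.symm ≠ d) : Γ.path K a b * Γ.path K b.symm d = 0 := by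
  have := pathN_mul_pathN_symm K a (dist_pos hab hne) (dist_pos hbd hne')
  rwa [iterate_dist hab] at this

lemma path_mul_path {a b d : Γ.Dart} (hab : a.fst = b.fst)
    (h : Γ.dist a b + Γ.dist b d = Γ.dist a d) :
    Γ.path K a b * Γ.path K b d = Γ.path K a d := by
  rw [path_eq, path_eq, path_eq, ← h, pathN_add, iterate_dist hab]

lemma idemAt_succ (a : Γ.Dart) (L : List Γ.Dart) (i : ℕ) :
    idemAt K (a :: L) (i + 1) = idemAt K L i := by
  simp [idemAt]

lemma idemAt_zero (a : Γ.Dart) (L : List Γ.Dart) : idemAt K (a :: L) 0 = Γ.e K (Γ.toEdge a) := by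
  simp [idemAt]

lemma idemAt_nil (i : ℕ) : idemAt K ([] : List Γ.Dart) i = 0 := by simp [idemAt]

lemma coeffAt_succ (a : Γ.Dart) (L : List Γ.Dart) (i m : ℕ) :
    coeffAt K (a :: L) (i + 1) (m + 1) = coeffAt K L i m := by
  simp [coeffAt, listCoeff]

lemma coeffAt_zero_one (a b : Γ.Dart) (L : List Γ.Dart) :
    coeffAt K (a :: b :: L) 0 1 = Γ.path K a.symm b := by
  simp [coeffAt, listCoeff]

lemma coeffAt_one_zero (a b : Γ.Dart) (L : List Γ.Dart) :
    coeffAt K (a :: b :: L) 1 0 = Γ.path K b a.symm := by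
  simp [coeffAt, listCoeff]

lemma coeffAt_eq_zero (L : List Γ.Dart) {i m : ℕ} (h : m ≠ i + 1) (h' : i ≠ m + 1) :
    coeffAt K L i m = 0 := by
  simp [coeffAt, listCoeff, h, h']

lemma link_self (a : Γ.Dart) : link K a a = 1 := if_pos rfl

lemma link_of_ne {a b : Γ.Dart} (h : a ≠ b) : link K a b = Γ.path K a b := if_neg h

/-- The commutation relations for the components of the comparison morphism. -/
lemma compare_comm {p : ℕ} {g a b : Γ.Dart} {as bs : List Γ.Dart} (hab : a.fst = b.fst)
    (ha : IsRoute a.symm as) (hb : IsRoute b.symm bs) (h : Γ.LexLt p g (b :: bs) (a :: as))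
    {i m : ℕ} (hi : Even (i + p)) (hm : Odd (m + p)) :
    idemAt K (a :: as) i * (coeffAt K (a :: as) i m * idemAt K (a :: as) m *
        compare K (a :: as) (b :: bs) m) * idemAt K (b :: bs) m =
      idemAt K (a :: as) i * (compare K (a :: as) (b :: bs) i * idemAt K (b :: bs) i *
        coeffAt K (b :: bs) i m) * idemAt K (b :: bs) m := by
  match i, m with
  | 0, 0 =>
    exact absurd hi (by simpa using hm)
  | 0, m + 2 =>
    simp only [coeffAt_eq_zero _ (show m + 2 ≠ 0 + 1 by omega) (show 0 ≠ m + 2 + 1 by omega),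
      zero_mul, mul_zero]
  | i + 2, 0 =>
    simp only [coeffAt_eq_zero _ (show 0 ≠ i + 2 + 1 by omega) (show i + 2 ≠ 0 + 1 by omega),
      zero_mul, mul_zero]
  | 0, 1 =>
    rw [zero_add] at hi
    simp only [idemAt_zero, idemAt_succ, compare]
    match bs, hb, h with
    | [], _, _ => simp only [idemAt_nil, mul_zero]
    | b₁ :: bs, hb, h =>
      rw [coeffAt_zero_one]
      by_cases hE : a = b
      · subst hE
        have h' := (h.resolve_right fun h' => h'.1 rfl).2
        match as, ha, h' with
        | [], _, h' => exact absurd h' (Nat.not_even_iff_odd.2 hi.add_one)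
        | a₁ :: as, ha, h' =>
          have hp : Γ.path K a.symm a₁ * (Γ.e K (Γ.toEdge a₁) * link K a₁ b₁) =
              Γ.path K a.symm b₁ := by
            by_cases hE' : a₁ = b₁
            · subst hE'
              rw [link_self, mul_one, path_mul_e ha.1 ha.2.1]
            · have h'' := h'.resolve_left fun h' => hE' h'.1.symm
              rw [link_of_ne hE', e_mul_path (ha.1.symm.trans hb.1) hE',
                path_mul_path ha.1 (dist_add_dist ha.1 hb.1 h''.2.le)]
          rw [if_pos rfl, coeffAt_zero_one, idemAt_zero, idemAt_zero, compare, link_self, one_mul,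
            mul_assoc (Γ.path K _ _), hp, ← toEdge_symm, e_mul_path hb.1 hb.2.1, e_mul_path hb.1 hb.2.1]
      · rw [if_neg hE, link_of_ne hE, path_mul_e hab hE, path_mul_path_symm hab hE hb.1 hb.2.1]
        simp only [mul_zero]
  | 1, 0 =>
    rw [zero_add] at hm
    simp only [idemAt_zero, idemAt_succ, compare]
    match as, ha, h with
    | [], _, _ => simp only [idemAt_nil, zero_mul]
    | a₁ :: as, ha, h =>
      rw [coeffAt_one_zero]
      by_cases hE : a = b
      · subst hE
        have h' := (h.resolve_right fun h' => h'.1 rfl).2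
        match bs, hb, h' with
        | [], _, h' => exact absurd h' (Nat.not_odd_iff_even.2 hm.add_one)
        | b₁ :: bs, hb, h' =>
          have hp : link K a₁ b₁ * Γ.e K (Γ.toEdge b₁) * Γ.path K b₁ a.symm =
              Γ.path K a₁ a.symm := by
            rw [mul_assoc, e_mul_path hb.1.symm hb.2.1.symm]
            by_cases hE' : a₁ = b₁
            · subst hE'
              rw [link_self, one_mul]
            · have h'' := h'.resolve_left fun h' => hE' h'.1.symm
              rw [link_of_ne hE', path_mul_path (ha.1.symm.trans hb.1)
                (dist_add_dist_back ha.1 hb.1 ha.2.1 h''.2)]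
          rw [if_pos rfl, coeffAt_one_zero, idemAt_zero, idemAt_zero, compare, link_self, mul_one,
            hp, ← toEdge_symm a, path_mul_e ha.1.symm ha.2.1.symm]
      · have hz : Γ.path K a₁ a.symm * Γ.path K a b = 0 := by
          have := path_mul_path_symm (K := K) ha.1.symm ha.2.1.symm
            (d := b) (by rwa [SimpleGraph.Dart.symm_symm]) (by rwa [SimpleGraph.Dart.symm_symm])
          rwa [SimpleGraph.Dart.symm_symm] at this
        rw [if_neg hE, link_of_ne hE, mul_assoc (Γ.path K _ _), e_mul_path hab hE, hz]
        simp only [mul_zero, zero_mul]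
  | i + 1, m + 1 =>
    simp only [idemAt_succ, coeffAt_succ, compare]
    by_cases hE : a = b
    swap
    · simp only [if_neg hE, zero_mul, mul_zero]
    subst hE
    simp only [if_true]
    match as, bs, ha, hb, h with
    | [], _, _, _, _ => simp only [idemAt_nil, zero_mul]
    | _ :: _, [], _, _, _ => simp only [idemAt_nil, mul_zero]
    | a₁ :: as, b₁ :: bs, ha, hb, h =>
      have h' := h.resolve_right fun h' => h'.1 rfl
      exact compare_comm (ha.1.symm.trans hb.1) ha.2.2 hb.2.2 h'.2
        (by rwa [add_right_comm, add_assoc] at hi) (by rwa [add_right_comm, add_assoc] at hm)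

/-- The morphism from a complex to a smaller one in the lexicographic order. -/
noncomputable def compareMap {c : V} {g : Γ.Dart} {L L' : List Γ.Dart} (hL : IsRouteFrom c L)
    (hL' : IsRouteFrom c L') (h : Γ.LexLt 1 g L' L) : listComplex K L ⟶ listComplex K L' :=
  doubleUpMap (ModuleCat.ofHom (diagMap (fun k => ¬ (Even k ↔ True)) (compare K L L')))
    (ModuleCat.ofHom (diagMap (fun k => Even k ↔ True) (compare K L L'))) (by
      rw [← ModuleCat.ofHom_comp, ← ModuleCat.ofHom_comp]
      congr 1
      match L, L', hL, hL' with
      | a :: as, b :: bs, hL, hL' =>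
        exact diagMap_comm fun i m hi hm =>
          compare_comm (hL.1.trans hL'.1.symm) hL.2 hL'.2 h hi.add_one hm.add_one)

section

open scoped Classical

attribute [local instance] Fintype.ofFinite

lemma rep_link {g a b : Γ.Dart} (ha : a.fst = g.fst) (hb : b.fst = g.fst)
    (h : Γ.dist g a ≤ Γ.dist g b) :
    rep K g (Γ.e K (Γ.toEdge a) * link K a b) = Matrix.single ⟨a, ha⟩ ⟨b, hb⟩ 1 := by
  by_cases hE : a = b
  · subst hE
    rw [link_self, mul_one, rep_e K ha]
  · have hab := ha.trans hb.symm
    rw [link_of_ne hE, path_eq, rep_e_mul_pathN K ha]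
    · congr 2
      exact iterate_dist hab
    · rw [dist_add_dist ha.symm hb.symm h]
      exact dist_lt hb.symm

lemma dist_le_of_lexLt {p : ℕ} {g a b : Γ.Dart} {as bs : List Γ.Dart}
    (h : Γ.LexLt p g (b :: bs) (a :: as)) : Γ.dist g a ≤ Γ.dist g b := by
  rcases h with ⟨rfl, -⟩ | ⟨-, h⟩
  · exact le_rfl
  · exact le_of_lt h

lemma rep_coeffAt_zero {g a : Γ.Dart} {as : List Γ.Dart} (hL : IsRouteFrom g.fst (a :: as))
    (i : ℕ) : rep K g (coeffAt K (a :: as) i 0) = 0 := by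
  by_cases hi : i = 1
  · subst hi
    match as, hL with
    | [], _ => simp [coeffAt]
    | b :: bs, hL =>
      rw [coeffAt_one_zero, path_eq]
      refine rep_pathN_eq_zero K ?_ (dist_pos hL.2.1.symm hL.2.2.1.symm)
      rw [← hL.2.1, ← hL.1]
      exact fst_symm_ne a
  · rw [coeffAt_eq_zero _ (by omega) hi, map_zero]

/-- The composition of the comparison morphisms along a decreasing triple is not zero in the homotopy
category. -/
lemma quotient_map_compareMap_ne_zero {g : Γ.Dart} {L₁ L₂ L₃ : List Γ.Dart}
    (h₁ : IsRouteFrom g.fst L₁) (h₂ : IsRouteFrom g.fst L₂) (h₃ : IsRouteFrom g.fst L₃)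
    (h₁₂ : Γ.LexLt 1 g L₂ L₁) (h₂₃ : Γ.LexLt 1 g L₃ L₂) :
    (HomotopyCategory.quotient _ _).map
      (compareMap (K := K) h₁ h₂ h₁₂ ≫ compareMap h₂ h₃ h₂₃) ≠ 0 := by
  intro h
  obtain ⟨s, hs⟩ := exists_factor_of_quotient_map_eq_zero
    (φ₁ := ModuleCat.ofHom (diagMap (L := L₁) (L' := L₂) (fun k => Even k ↔ True)
      (compare K L₁ L₂)) ≫ ModuleCat.ofHom (diagMap (L := L₂) (L' := L₃) (fun k => Even k ↔ True)
      (compare K L₂ L₃))) (doubleUpMap_comp_f_one ..) h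
  match L₁, L₂, L₃, h₁, h₂, h₃ with
  | a :: as, b :: bs, d :: ds, h₁, h₂, h₃ =>
    let x : (k : {k : Fin (a :: as).length // Even (k : ℕ) ↔ True}) →
        Γ.Proj K (Γ.toEdge ((a :: as).get k)) :=
      fun k => ⟨Γ.e K (Γ.toEdge ((a :: as).get k)), Ideal.subset_span rfl⟩
    have hx : coord x 0 = Γ.e K (Γ.toEdge a) :=
      coord_coe x ⟨⟨0, by simp⟩, by simp⟩
    have e := congrArg (fun f => rep K g (coord (f.hom x) 0)) hs
    simp only [ModuleCat.hom_comp, ModuleCat.hom_ofHom, LinearMap.comp_apply, coord_diagMap,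
      coord_listDiff _ _ le_rfl Even.zero, hx, map_sum, map_mul, rep_coeffAt_zero h₃, mul_zero,
      zero_mul, Finset.sum_const_zero, idemAt_zero, compare] at e
    rw [← map_mul, rep_link h₁.1 h₂.1 (dist_le_of_lexLt h₁₂), mul_assoc (Matrix.single _ _ _),
      ← map_mul, rep_link h₂.1 h₃.1 (dist_le_of_lexLt h₂₃), rep_e K h₃.1,
      Matrix.single_mul_single_same, Matrix.single_mul_single_same] at e
    have := congrFun (congrFun e ⟨a, h₁.1⟩) ⟨d, h₃.1⟩
    simp at this

end

end Comparison

end BrauerTree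

/-! ### Summands and the endomorphism algebra -/

namespace BrauerTree

section Summands

variable {V : Type v} [Finite V] {Γ : BrauerTree V} {K : Type u} [Field K] {T : Γ.Cplx K}
  {W : Type w} [Finite W] {Δ : BrauerTree W} {φ : EndIso Δ T}

lemma IsSummandAt.of_iso {x : Δ.Edge} {S S' : Γ.Cplx K} (h : IsSummandAt φ x S) (e : S ≅ S') :
    IsSummandAt φ x S' := by
  obtain ⟨i, p, h1, h2⟩ := h
  let e' := (HomotopyCategory.quotient _ _).mapIso e
  refine ⟨e'.inv ≫ i, p ≫ e'.hom, ?_, ?_⟩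
  · rw [Category.assoc, reassoc_of% h1, e'.inv_hom_id]
  · rw [Category.assoc, e'.hom_inv_id_assoc, h2]

lemma IsSinkListAt.isSummandAt {c : V} {x : Δ.Edge} {L : List Γ.Dart} (h : IsSinkListAt φ c x L) :
    IsRouteFrom c L ∧ IsSummandAt φ x (listComplex K L) := by
  obtain ⟨S, hS, hL⟩ := h
  obtain ⟨h1, ⟨e⟩⟩ := hL.iso
  exact ⟨h1, hS.of_iso e⟩

variable (φ) in
/-- The element of the Brauer tree algebra that corresponds to an endomorphism of `T`. -/
noncomputable def ofEnd (f : Γ.toHo K T ⟶ Γ.toHo K T) : Δ.Alg K :=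
  φ.symm (MulOpposite.op (End.of f))

lemma ofEnd_mul_ofEnd (f g : Γ.toHo K T ⟶ Γ.toHo K T) :
    ofEnd φ f * ofEnd φ g = ofEnd φ (f ≫ g) := by
  rw [ofEnd, ofEnd, ← map_mul, ← MulOpposite.op_mul]
  rfl

lemma ofEnd_eq_e {x : Δ.Edge} {f : Γ.toHo K T ⟶ Γ.toHo K T} (h : f = (φ (Δ.e K x)).unop) :
    ofEnd φ f = Δ.e K x := by
  subst h
  exact φ.symm_apply_apply _

lemma ofEnd_eq_zero {f : Γ.toHo K T ⟶ Γ.toHo K T} (h : ofEnd φ f = 0) : f = 0 := by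
  have := φ.symm.injective (h.trans (map_zero φ.symm).symm)
  exact congrArg MulOpposite.unop this

/-- Summands at different edges are not isomorphic. -/
lemma IsSummandAt.unique {x y : Δ.Edge} {S : Γ.Cplx K} (hx : IsSummandAt φ x S)
    (hy : IsSummandAt φ y S) : x = y := by
  obtain ⟨i, p, h1, h2⟩ := hx
  obtain ⟨i', p', h1', h2'⟩ := hy
  refine eq_of_mul_eq_e K (x := ofEnd φ (p ≫ i')) (y := ofEnd φ (p' ≫ i)) ?_ ?_
  · rw [ofEnd_mul_ofEnd, Category.assoc, reassoc_of% h1', ofEnd_eq_e h2]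
  · rw [ofEnd_mul_ofEnd, Category.assoc, reassoc_of% h1, ofEnd_eq_e h2']

/-- If the composition of two morphisms between three different summands at a vertex is not zero,
then these summands are met in this order when one goes around the vertex once. -/
lemma dist_add_dist_le_of_comp_ne_zero {a b d : Δ.Dart} (hab : a.fst = b.fst) (hbd : b.fst = d.fst)
    (hne : a ≠ b) (hne' : b ≠ d) {A B D : Γ.Cplx K} (hA : IsSummandAt φ (Δ.toEdge a) A)
    (hB : IsSummandAt φ (Δ.toEdge b) B) (hD : IsSummandAt φ (Δ.toEdge d) D)
    {f : Γ.toHo K A ⟶ Γ.toHo K B} {g : Γ.toHo K B ⟶ Γ.toHo K D} (hfg : f ≫ g ≠ 0) :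
    Δ.dist a b + Δ.dist b d ≤ Δ.period a := by
  obtain ⟨i, p, h, hi⟩ := hA
  obtain ⟨i', p', h', hi'⟩ := hB
  obtain ⟨i'', p'', h'', hi''⟩ := hD
  refine dist_add_dist_le_of_mul_ne_zero K hab hbd hne hne'
    (x := ofEnd φ (p ≫ f ≫ i')) (y := ofEnd φ (p' ≫ g ≫ i'')) ?_ ?_ ?_
  · rw [← ofEnd_eq_e hi, ← ofEnd_eq_e hi', ofEnd_mul_ofEnd, ofEnd_mul_ofEnd]
    simp only [Category.assoc, reassoc_of% h, reassoc_of% h']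
  · rw [← ofEnd_eq_e hi', ← ofEnd_eq_e hi'', ofEnd_mul_ofEnd, ofEnd_mul_ofEnd]
    simp only [Category.assoc, reassoc_of% h', reassoc_of% h'']
  · rw [ofEnd_mul_ofEnd]
    intro h0
    have := congrArg (fun k => i ≫ k ≫ p'') (ofEnd_eq_zero h0)
    simp only [Category.assoc, reassoc_of% h, reassoc_of% h', h'', Category.comp_id, zero_comp,
      comp_zero] at this
    exact hfg this

end Summands

end BrauerTree

/-- Let `T` be a basic two-term tilting complex over the Brauer tree algebra of `Γ`, `Δ` the Brauer
tree of its endomorphism algebra, and `z` a vertex of `Δ` that corresponds to the sinks on the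
`A`-cycle `c`.  The lexicographic order is linear on the edges at `z`, and the cyclic ordering of
the edges at `z` is the one glued from it. -/
theorem cyclic_order_at_sink_cycle {K : Type u} [Field K] [IsAlgClosed K]
    {V : Type v} [Finite V] (Γ : BrauerTree V)
    (T : Γ.Cplx K) (two_term : BrauerTree.IsTwoTerm T) (tilting : BrauerTree.IsTilting T)
    (basic : BrauerTree.IsBasic T)
    {W : Type w} [Finite W] (Δ : BrauerTree W) (φ : BrauerTree.EndIso Δ T)
    (c : V) (z : W) (sink_vertex : BrauerTree.IsSinkVertex φ c z)
    (L : {d : Δ.Dart // d.fst = z} → List Γ.Dart)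
    (hL : ∀ d, BrauerTree.IsSinkListAt φ c (Δ.toEdge d.1) (L d))
    (g : Γ.Dart) (hg : g.fst = c) :
    IsStrictTotalOrder {d : Δ.Dart // d.fst = z} (fun a b => Γ.LexLt 1 g (L a) (L b)) ∧
      ∀ a b : {d : Δ.Dart // d.fst = z},
        Δ.next a.1 = b.1 ↔ GluedNext (fun a b => Γ.LexLt 1 g (L a) (L b)) a b := by
  have hS := fun d => (hL d).isSummandAt
  subst hg
  have hinj : ∀ a b, L a = L b → a = b := by
    intro a b h
    have hb := (hS b).2
    rw [← h] at hb
    exact Subtype.ext (BrauerTree.eq_of_toEdge_eq ((hS a).2.unique hb) (a.2.trans b.2.symm))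
  have horder : IsStrictTotalOrder {d : Δ.Dart // d.fst = z}
      (fun a b => Γ.LexLt 1 g (L a) (L b)) :=
    { irrefl := fun a => BrauerTree.lexLt_irrefl 1 g (L a)
      trans := fun _ _ _ h h' => BrauerTree.lexLt_trans h h'
      trichotomous := fun a b h h' => by
        rcases BrauerTree.lexLt_trichotomy_from (p := 1) (hS a).1 (hS b).1 with h1 | h1 | h1
        · exact absurd h1 h
        · exact hinj a b h1
        · exact absurd h1 h' }
  have hglued : ∀ a b : {d : Δ.Dart // d.fst = z}, Δ.next a.1 = b.1 →
      GluedNext (fun a b => Γ.LexLt 1 g (L a) (L b)) a b := by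
    refine BrauerTree.gluedNext_of_triples fun a b d hab hbd => ?_
    have hne : ∀ {x y : {d : Δ.Dart // d.fst = z}}, Γ.LexLt 1 g (L x) (L y) → y.1 ≠ x.1 := by
      intro x y h e
      rw [Subtype.ext e] at h
      exact BrauerTree.lexLt_irrefl 1 g _ h
    have hcomp := BrauerTree.quotient_map_compareMap_ne_zero (K := K)
      (hS a).1 (hS b).1 (hS d).1 hab hbd
    rw [Functor.map_comp] at hcomp
    exact BrauerTree.dist_add_dist_le_of_comp_ne_zero (a.2.trans b.2.symm) (b.2.trans d.2.symm)
      (hne hab) (hne hbd) (hS a).2 (hS b).2 (hS d).2 hcomp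
  refine ⟨horder, fun a b => ⟨hglued a b, fun h => ?_⟩⟩
  have h' := hglued a ⟨Δ.next a.1, (Δ.fst_next _).trans a.2⟩ rfl
  exact congrArg Subtype.val (BrauerTree.gluedNext_unique h' h)
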